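/- arXiv:1301.0727 — 2 statements merged into one kernel-verified Lean document; each statement's English description precedes it below -/
import Mathlib

section
/- Fix a ∈ ℝ. There exists a solution (Φ, W, Ψ, θ) of system (D) defined for all τ ∈ ℝ, with Φ(τ) > 0 and θ(τ) ∈ (−π/2, π/2) for all τ ∈ ℝ, such that (Φ(τ), W(τ), Ψ(τ), θ(τ)) → (1, 0, 0, π/2) as τ → +∞, θ(τ) → −π/2 as τ → −∞, and liminf_{τ→−∞} Φ(τ) < ∞. -/
open Filter Set

/-- The right-hand side of the `Ψ` equation in system (D). -/
noncomputable def dPsi (a Φ W Ψ θ : ℝ) : ℝ :=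
  1 / Φ ^ 3 - 1 - (a - 1) * Real.cos θ ^ 2 -
    (((16 / 3) * Real.sin θ - (224 / 27) * Real.sin θ ^ 3) * Real.cos θ ^ ((17 : ℝ) / 3) * Φ
      + ((208 / 81) * Real.sin θ ^ 2 - 10 / 9) * Real.cos θ ^ ((34 : ℝ) / 9) * W
      + (2 / 3) * Real.sin θ * Real.cos θ ^ ((17 : ℝ) / 9) * Ψ)

/-- `(Φ, W, Ψ, θ)` is a solution of system (D) on all of `ℝ`. -/
noncomputable def SolD (a : ℝ) (Φ W Ψ θ : ℝ → ℝ) : Prop :=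
  ∀ τ : ℝ,
    HasDerivAt Φ (W τ) τ ∧
    HasDerivAt W (Ψ τ) τ ∧
    HasDerivAt Ψ (dPsi a (Φ τ) (W τ) (Ψ τ) (θ τ)) τ ∧
    HasDerivAt θ (Real.cos (θ τ) ^ ((26 : ℝ) / 9)) τ

open scoped Topology Asymptotics

/-!
With `θ = arctan X` and `X' = (1 + X²)^(-4/9)`, the substitution
`Φ(τ) = (1 + X²)^(1/3) U(-X)` turns system (D) into the profile equation
`U''' = y² + a - U⁻³`, `U > 0`. The point `p₊` corresponds to the slow branch `U ~ (-y)^(-2/3)` at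
`-∞`, and `Φ → ∞` as `τ → -∞` would make `U`, `U'`, `U''` eventually increase, that is, `U` escape.
So one needs a global profile on the slow branch at `-∞` that never escapes.

On `[-n, n]`, start on the slow branch at `-n` and shoot with the second derivative there. For small
values the solution hits zero, for large ones it does not. The threshold solution touches zero, but
only in `(n - 2, n]`, since a solution with small minimum is driven to zero within time two by the
singular term. Hence it does not escape before `n - 2`. An energy for `V = U - (-y)^(-2/3)` shows
that when `V` first leaves a tube `|V| ≤ δ (-y)^(-2/3)`, both `V'` and `V''` have the sign of `V`.
Leaving through the top therefore makes `U` escape and leaving through the bottom makes it hit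
zero, so the threshold solutions stay in the tube. The resulting bounds are locally uniform in `n`
and a limit along an ultrafilter is the required profile.
-/

/-! ### Calculus of triple derivatives -/

section Calculus

theorem forall_Icc_lt_of_forall_Ico {α β : Type*} [LinearOrder α] [TopologicalSpace α]
    [CompactIccSpace α] [OrderClosedTopology α] [LinearOrder β] [TopologicalSpace β]
    [OrderClosedTopology β] {f : α → β} {s t : α} {c : β} (hf : ContinuousOn f (Icc s t))
    (h : ∀ y ∈ Icc s t, (∀ z ∈ Ico s y, c < f z) → c < f y) : ∀ y ∈ Icc s t, c < f y := by
  by_contra! hcon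
  have hcompact : IsCompact (Icc s t ∩ f ⁻¹' Iic c) :=
    isCompact_Icc.of_isClosed_subset
      (hf.preimage_isClosed_of_isClosed isClosed_Icc isClosed_Iic) inter_subset_left
  obtain ⟨y, ⟨hy, hfy⟩, hleast⟩ := hcompact.exists_isLeast hcon
  refine (h y hy fun z hz => ?_).not_ge hfy
  by_contra! hfz
  exact hz.2.not_ge (hleast ⟨⟨hz.1, hz.2.le.trans hy.2⟩, hfz⟩)

theorem forall_Icc_lt_of_forall_Ico_ne {α β : Type*} [LinearOrder α] [TopologicalSpace α]
    [CompactIccSpace α] [OrderTopology α] [DenselyOrdered α] [LinearOrder β] [TopologicalSpace β]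
    [OrderClosedTopology β] {f : α → β} {s t : α} {c : β} (hf : ContinuousOn f (Icc s t))
    (hs : c < f s) (h : ∀ y ∈ Ioc s t, (∀ z ∈ Ico s y, c < f z) → f y ≠ c) :
    ∀ y ∈ Icc s t, c < f y := by
  refine forall_Icc_lt_of_forall_Ico hf fun y hy hlt => ?_
  rcases hy.1.eq_or_lt with rfl | hsy
  · exact hs
  have hclosure : y ∈ closure (Ico s y) := by
    rw [closure_Ico hsy.ne]
    exact right_mem_Icc.2 hsy.le
  have hsub : Ico s y ⊆ Icc s t := fun z hz => ⟨hz.1, hz.2.le.trans hy.2⟩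
  have hle : c ≤ f y := continuousWithinAt_const.closure_le hclosure ((hf y hy).mono hsub)
    fun z hz => (hlt z hz).le
  exact hle.lt_of_ne' (h y ⟨hsy, hy.2⟩ hlt)

variable {f f' g g' : ℝ → ℝ} {s t : ℝ}

theorem le_of_hasDerivAt_le (hf : ∀ y ∈ Icc s t, HasDerivAt f (f' y) y)
    (hg : ∀ y ∈ Icc s t, HasDerivAt g (g' y) y) (hs : f s ≤ g s)
    (h : ∀ y ∈ Ico s t, f' y ≤ g' y) : ∀ y ∈ Icc s t, f y ≤ g y :=
  image_le_of_deriv_right_le_deriv_boundary (HasDerivAt.continuousOn hf)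
    (fun y hy => (hf y (Ico_subset_Icc_self hy)).hasDerivWithinAt) hs (HasDerivAt.continuousOn hg)
    (fun y hy => (hg y (Ico_subset_Icc_self hy)).hasDerivWithinAt) h

theorem le_add_mul_of_hasDerivAt_le {c : ℝ} (hf : ∀ y ∈ Icc s t, HasDerivAt f (f' y) y)
    (h : ∀ y ∈ Ico s t, f' y ≤ c) : ∀ y ∈ Icc s t, f y ≤ f s + c * (y - s) :=
  le_of_hasDerivAt_le hf
    (fun y _ => ((((hasDerivAt_id y).sub_const s).const_mul c).const_add (f s)).congr_deriv
      (mul_one c)) (by simp) h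

theorem le_of_hasDerivAt_nonneg (hf : ∀ y ∈ Icc s t, HasDerivAt f (f' y) y)
    (h : ∀ y ∈ Ico s t, 0 ≤ f' y) : ∀ y ∈ Icc s t, f s ≤ f y :=
  le_of_hasDerivAt_le (fun y _ => hasDerivAt_const y (f s)) hf le_rfl h

theorem abs_le_mul_of_abs_hasDerivAt_le {K : ℝ} (hf : ∀ y ∈ Icc s t, HasDerivAt f (f' y) y)
    (hs : |f s| ≤ K) (h : ∀ y ∈ Icc s t, |f' y| ≤ K) :
    ∀ y ∈ Icc s t, |f y| ≤ K * (1 + (t - s)) := by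
  intro y hy
  have hdiff : |f y - f s| ≤ K * (y - s) :=
    norm_image_sub_le_of_norm_deriv_le_segment' (fun z hz => (hf z hz).hasDerivWithinAt)
      (fun z hz => h z (Ico_subset_Icc_self hz)) y hy
  have hlen : K * (y - s) ≤ K * (t - s) :=
    mul_le_mul_of_nonneg_left (by linarith [hy.2]) ((abs_nonneg _).trans hs)
  linarith [abs_sub_abs_le_abs_sub (f y) (f s)]

theorem nonpos_of_hasDerivAt_of_forall_Ico_le {d y : ℝ} (hf : HasDerivAt f d y) (hsy : s < y)
    (h : ∀ z ∈ Ico s y, f y ≤ f z) : d ≤ 0 := by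
  refine le_of_tendsto (hf.tendsto_slope.mono_left (nhdsLT_le_nhdsNE y)) ?_
  filter_upwards [Ico_mem_nhdsLT hsy] with z hz
  rw [slope_def_field]
  exact div_nonpos_of_nonneg_of_nonpos (sub_nonneg.2 (h z hz)) (sub_nonpos.2 hz.2.le)

theorem le_of_hasDerivAt_le_sub_inv_cube {C h K : ℝ} (hh : 0 < h) (hK : 0 < K)
    (hf : ∀ y ∈ Icc s t, HasDerivAt f (f' y) y)
    (hf' : ∀ y ∈ Ico s t, f' y ≤ C - 1 / (h + K * (y - s)) ^ 3) :
    ∀ y ∈ Icc s t,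
      f y ≤ f s + C * (y - s) + 1 / (2 * K) * (1 / (h + K * (y - s)) ^ 2 - 1 / h ^ 2) := by
  have hlin : ∀ y ∈ Icc s t, 0 < h + K * (y - s) := fun y hy => by
    have : 0 ≤ K * (y - s) := mul_nonneg hK.le (sub_nonneg.2 hy.1)
    linarith
  refine le_of_hasDerivAt_le hf (fun y hy => ?_) (by simp) hf'
  have hd : HasDerivAt (fun y => y - s) 1 y := (hasDerivAt_id y).sub_const s
  have hden : HasDerivAt (fun y => (h + K * (y - s)) ^ 2) (2 * (h + K * (y - s)) * K) y :=
    (((hd.const_mul K).const_add h).fun_pow 2).congr_deriv (by norm_num)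
  have hinv := (hasDerivAt_const y (1 : ℝ)).fun_div hden (pow_ne_zero 2 (hlin y hy).ne')
  refine (((hd.const_mul C).const_add (f s)).fun_add
    ((hinv.sub_const (1 / h ^ 2)).const_mul (1 / (2 * K)))).congr_deriv ?_
  have := (hlin y hy).ne'
  field_simp
  ring

end Calculus

/-- The functions `u₁`, `u₂`, `u₃` are the first three derivatives of `u` at the points of `s`.
Carrying them as separate functions avoids the junk values of `deriv`. -/
structure JetOn (u u₁ u₂ u₃ : ℝ → ℝ) (s : Set ℝ) : Prop where
  hasDerivAt : ∀ y ∈ s, HasDerivAt u (u₁ y) y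
  hasDerivAt₁ : ∀ y ∈ s, HasDerivAt u₁ (u₂ y) y
  hasDerivAt₂ : ∀ y ∈ s, HasDerivAt u₂ (u₃ y) y

namespace JetOn

variable {u u₁ u₂ u₃ : ℝ → ℝ} {s t : ℝ}

theorem mono {S T : Set ℝ} (h : JetOn u u₁ u₂ u₃ T) (hST : S ⊆ T) : JetOn u u₁ u₂ u₃ S :=
  ⟨fun y hy => h.1 y (hST hy), fun y hy => h.2 y (hST hy), fun y hy => h.3 y (hST hy)⟩

theorem neg {S : Set ℝ} (h : JetOn u u₁ u₂ u₃ S) : JetOn (-u) (-u₁) (-u₂) (-u₃) S :=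
  ⟨fun y hy => (h.1 y hy).neg, fun y hy => (h.2 y hy).neg, fun y hy => (h.3 y hy).neg⟩

theorem le_taylor {B : ℝ} (h : JetOn u u₁ u₂ u₃ (Icc s t)) (hB : ∀ y ∈ Ico s t, u₃ y ≤ B) :
    ∀ y ∈ Icc s t, u₂ y ≤ u₂ s + B * (y - s) ∧
      u₁ y ≤ u₁ s + u₂ s * (y - s) + B / 2 * (y - s) ^ 2 ∧
      u y ≤ u s + u₁ s * (y - s) + u₂ s / 2 * (y - s) ^ 2 + B / 6 * (y - s) ^ 3 := by
  have hd : ∀ y, HasDerivAt (fun y => y - s) 1 y := fun y => (hasDerivAt_id y).sub_const s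
  have hu₂ := le_add_mul_of_hasDerivAt_le h.hasDerivAt₂ hB
  have hu₁ := le_of_hasDerivAt_le (g := fun y => u₁ s + u₂ s * (y - s) + B / 2 * (y - s) ^ 2)
    h.hasDerivAt₁ (fun y _ => ((((hd y).const_mul (u₂ s)).const_add (u₁ s)).fun_add
      (((hd y).fun_pow 2).const_mul (B / 2))).congr_deriv (by ring)) (by simp)
    fun y hy => hu₂ y (Ico_subset_Icc_self hy)
  have hu := le_of_hasDerivAt_le
    (g := fun y => u s + u₁ s * (y - s) + u₂ s / 2 * (y - s) ^ 2 + B / 6 * (y - s) ^ 3)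
    h.hasDerivAt (fun y _ => (((((hd y).const_mul (u₁ s)).const_add (u s)).fun_add
      (((hd y).fun_pow 2).const_mul (u₂ s / 2))).fun_add
      (((hd y).fun_pow 3).const_mul (B / 6))).congr_deriv (by ring)) (by simp)
    fun y hy => hu₁ y (Ico_subset_Icc_self hy)
  exact fun y hy => ⟨hu₂ y hy, hu₁ y hy, hu y hy⟩

theorem taylor_le {B : ℝ} (h : JetOn u u₁ u₂ u₃ (Icc s t)) (hB : ∀ y ∈ Ico s t, B ≤ u₃ y) :
    ∀ y ∈ Icc s t, u₂ s + B * (y - s) ≤ u₂ y ∧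
      u₁ s + u₂ s * (y - s) + B / 2 * (y - s) ^ 2 ≤ u₁ y ∧
      u s + u₁ s * (y - s) + u₂ s / 2 * (y - s) ^ 2 + B / 6 * (y - s) ^ 3 ≤ u y := by
  intro y hy
  obtain ⟨h₂, h₁, h₀⟩ := h.neg.le_taylor (fun y hy => neg_le_neg (hB y hy)) y hy
  simp only [Pi.neg_apply] at h₂ h₁ h₀
  exact ⟨by linarith, by linarith, by linarith⟩

theorem eventually_pos_of_le {B : ℝ} (h : JetOn u u₁ u₂ u₃ (Ici s))
    (hB : 0 < B) (hu₃ : ∀ y, s ≤ y → B ≤ u₃ y) : ∀ᶠ y in atTop, 0 < u₁ y ∧ 0 < u₂ y := by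
  have hid : Tendsto (fun y : ℝ => y - s) atTop atTop := 
    tendsto_atTop_add_const_right _ _ tendsto_id
  have hlin : ∀ {b : ℝ}, 0 < b → Tendsto (fun y => u₂ s + b * (y - s)) atTop atTop := fun hb =>
    tendsto_atTop_add_const_left _ _ (hid.const_mul_atTop hb)
  have hquad : Tendsto (fun y => u₁ s + (u₂ s + B / 2 * (y - s)) * (y - s)) atTop atTop :=
    tendsto_atTop_add_const_left _ _ ((hlin (half_pos hB)).atTop_mul_atTop₀ hid)
  filter_upwards [hquad.eventually_gt_atTop 0, (hlin hB).eventually_gt_atTop 0,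
    eventually_ge_atTop s] with y hy₁ hy₂ hy
  obtain ⟨h₂, h₁, -⟩ := (h.mono Icc_subset_Ici_self).taylor_le (fun z hz => hu₃ z hz.1) y
    (right_mem_Icc.2 hy)
  exact ⟨by linarith, by linarith⟩

theorem abs_le_of_abs_third_le {M B : ℝ} (h : JetOn u u₁ u₂ u₃ (Icc s t)) (hs : |u s| ≤ M)
    (hs₁ : |u₁ s| ≤ M) (hs₂ : |u₂ s| ≤ M) (hB : ∀ y ∈ Icc s t, |u₃ y| ≤ B) :
    ∀ y ∈ Icc s t, |u y| ≤ (M + B) * (1 + (t - s)) ^ 3 ∧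
      |u₁ y| ≤ (M + B) * (1 + (t - s)) ^ 3 ∧ |u₂ y| ≤ (M + B) * (1 + (t - s)) ^ 3 := by
  rintro y hy
  have hst : s ≤ t := hy.1.trans hy.2
  have hM : 0 ≤ M := (abs_nonneg _).trans hs
  have hB₀ : 0 ≤ B := (abs_nonneg _).trans (hB y hy)
  have hL : 1 ≤ 1 + (t - s) := by linarith
  set L := 1 + (t - s)
  have hK : M ≤ M + B := by linarith
  have hK₀ : M + B ≤ (M + B) * L := le_mul_of_one_le_right (by positivity) hL
  have hK₁ : (M + B) * L ≤ (M + B) * L * L := le_mul_of_one_le_right (by positivity) hL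
  have hK₂ : (M + B) * L * L ≤ (M + B) * L * L * L := le_mul_of_one_le_right (by positivity) hL
  have hu₂ := abs_le_mul_of_abs_hasDerivAt_le h.hasDerivAt₂ (hs₂.trans hK)
    fun z hz => (hB z hz).trans (by linarith)
  have hu₁ := abs_le_mul_of_abs_hasDerivAt_le h.hasDerivAt₁ ((hs₁.trans hK).trans hK₀) hu₂
  have hu := abs_le_mul_of_abs_hasDerivAt_le h.hasDerivAt (((hs.trans hK).trans hK₀).trans hK₁)
    hu₁
  rw [show (M + B) * L ^ 3 = (M + B) * L * L * L by ring]
  exact ⟨hu y hy, (hu₁ y hy).trans hK₂, ((hu₂ y hy).trans hK₁).trans hK₂⟩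

-- Landau's inequalities: the combinations `4 u(s+l) - u(s+2l) - 3 u(s)` and
-- `u(s+2l) - 2 u(s+l) + u(s)` equal `2 l u₁(s)` and `l² u₂(s)` up to third order.
theorem mul_abs_le_of_abs_sub_le {l k A B : ℝ} (hl : 0 ≤ l)
    (h : JetOn u u₁ u₂ u₃ (Icc s (s + 2 * l))) (hA : ∀ y ∈ Icc s (s + 2 * l), |u y - k| ≤ A)
    (hB : ∀ y ∈ Icc s (s + 2 * l), |u₃ y| ≤ B) :
    l * |u₁ s| ≤ 4 * A + B * l ^ 3 ∧ l ^ 2 * |u₂ s| ≤ 4 * A + 2 * B * l ^ 3 := by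
  have hmem₀ : s ∈ Icc s (s + 2 * l) := ⟨le_rfl, by linarith⟩
  have hmem₁ : s + l ∈ Icc s (s + 2 * l) := ⟨by linarith, by linarith⟩
  have hmem₂ : s + 2 * l ∈ Icc s (s + 2 * l) := ⟨by linarith, le_rfl⟩
  have hup := h.le_taylor fun y hy => (abs_le.1 (hB y (Ico_subset_Icc_self hy))).2
  have hlow := h.taylor_le fun y hy => (abs_le.1 (hB y (Ico_subset_Icc_self hy))).1
  have hup₁ := (hup _ hmem₁).2.2
  have hup₂ := (hup _ hmem₂).2.2
  have hlow₁ := (hlow _ hmem₁).2.2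
  have hlow₂ := (hlow _ hmem₂).2.2
  obtain ⟨hA₀, hA₀'⟩ := abs_le.1 (hA _ hmem₀)
  obtain ⟨hA₁, hA₁'⟩ := abs_le.1 (hA _ hmem₁)
  obtain ⟨hA₂, hA₂'⟩ := abs_le.1 (hA _ hmem₂)
  have hBl : 0 ≤ B * l ^ 3 := mul_nonneg ((abs_nonneg _).trans (hB _ hmem₀)) (by positivity)
  simp only [add_sub_cancel_left] at hup₁ hup₂ hlow₁ hlow₂
  rw [← abs_of_nonneg hl, ← abs_mul, sq_abs, ← abs_of_nonneg (sq_nonneg l), ← abs_mul,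
    abs_le, abs_le, abs_of_nonneg hl]
  constructor <;> constructor <;> linarith

theorem le_of_neg_le {c : ℝ} (h : JetOn u u₁ u₂ u₃ (Icc s t)) (hs₁ : 0 ≤ u₁ s) (hc : 0 ≤ c)
    (hs₂ : c * (t - s) < u₂ s) (hu₃ : ∀ y ∈ Icc s t, u s ≤ u y → -c ≤ u₃ y) :
    ∀ y ∈ Icc s t, u s ≤ u y ∧ u₁ s ≤ u₁ y ∧ 0 < u₂ y := by
  have key : ∀ y ∈ Icc s t, (∀ z ∈ Ico s y, 0 < u₂ z) → u s ≤ u y ∧ u₁ s ≤ u₁ y := by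
    intro y hy hpos
    have h' := h.mono (Icc_subset_Icc_right hy.2)
    have hu₁ := le_of_hasDerivAt_nonneg h'.hasDerivAt₁ fun z hz => (hpos z hz).le
    have hu := le_of_hasDerivAt_nonneg h'.hasDerivAt
      fun z hz => hs₁.trans (hu₁ z (Ico_subset_Icc_self hz))
    exact ⟨hu y (right_mem_Icc.2 hy.1), hu₁ y (right_mem_Icc.2 hy.1)⟩
  have hpos : ∀ y ∈ Icc s t, 0 < u₂ y := by
    refine forall_Icc_lt_of_forall_Ico (HasDerivAt.continuousOn h.hasDerivAt₂) fun y hy hpos => ?_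
    have htaylor := ((h.mono (Icc_subset_Icc_right hy.2)).taylor_le (B := -c) (fun z hz => by
      have hz' : z ∈ Icc s t := ⟨hz.1, hz.2.le.trans hy.2⟩
      exact hu₃ z hz' (key z hz' fun w hw => hpos w ⟨hw.1, hw.2.trans hz.2⟩).1) y
        (right_mem_Icc.2 hy.1)).1
    have : c * (y - s) ≤ c * (t - s) := by gcongr; exact hy.2
    linarith
  intro y hy
  obtain ⟨hu, hu₁⟩ := key y hy fun z hz => hpos z ⟨hz.1, hz.2.le.trans hy.2⟩
  exact ⟨hu, hu₁, hpos y hy⟩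

theorem second_le_sub_inv_sq {ε C K : ℝ} (h : JetOn u u₁ u₂ u₃ (Icc s (s + 1))) (hK : 1 ≤ K)
    (hpos : ∀ y ∈ Icc s (s + 1), 0 < max (u y) ε) (hu₁ : ∀ y ∈ Icc s (s + 1), u₁ y ≤ K)
    (hu₃ : ∀ y ∈ Icc s (s + 1), u₃ y ≤ C - 1 / max (u y) ε ^ 3) :
    u₂ (s + 1) ≤ u₂ s + C + 1 - 1 / (2 * K * max (u s) ε ^ 2) := by
  have hm : 0 < max (u s) ε := hpos s (left_mem_Icc.2 (by linarith))
  have hmu : u s ≤ max (u s) ε := le_max_left _ _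
  have hmε : ε ≤ max (u s) ε := le_max_right _ _
  set m := max (u s) ε
  have hlin : ∀ y ∈ Icc s (s + 1), max (u y) ε ≤ m + K * (y - s) := fun y hy => by
    have hu := le_add_mul_of_hasDerivAt_le h.hasDerivAt
      (fun z hz => hu₁ z (Ico_subset_Icc_self hz)) y hy
    have : 0 ≤ K * (y - s) := mul_nonneg (by linarith) (sub_nonneg.2 hy.1)
    exact max_le (by linarith) (by linarith)
  have hforce : ∀ y ∈ Ico s (s + 1), u₃ y ≤ C - 1 / (m + K * (y - s)) ^ 3 := fun y hy => by
    have hy' := Ico_subset_Icc_self hy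
    refine (hu₃ y hy').trans (sub_le_sub_left ?_ C)
    have := hpos y hy'
    gcongr
    exact hlin y hy'
  have hint := le_of_hasDerivAt_le_sub_inv_cube hm (by linarith : 0 < K) h.hasDerivAt₂ hforce
    (s + 1) (right_mem_Icc.2 (by linarith))
  rw [add_sub_cancel_left, mul_one, mul_one, mul_sub, one_div_mul_one_div,
    one_div_mul_one_div] at hint
  have hsmall : 1 / (2 * K * (m + K) ^ 2) ≤ 1 := by
    rw [div_le_one (by positivity)]
    nlinarith [one_le_pow₀ (n := 2) (by linarith : 1 ≤ m + K)]
  linarith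

theorem inv_sq_le_of_le_sub_inv_cube {ε C K₁ K₂ : ℝ} (h : JetOn u u₁ u₂ u₃ (Icc s (s + 2)))
    (hC : 0 ≤ C) (hK₁ : 1 ≤ K₁) (hpos : ∀ y ∈ Icc s (s + 2), 0 < max (u y) ε)
    (hu₁ : ∀ y ∈ Icc s (s + 2), u₁ y ≤ K₁) (hu₂ : u₂ s ≤ K₂)
    (hu₃ : ∀ y ∈ Icc s (s + 2), u₃ y ≤ C - 1 / max (u y) ε ^ 3) (hend : 0 ≤ u (s + 2)) :
    1 / (2 * K₁ * max (u s) ε ^ 2) ≤ K₂ + 2 * C + 4 * K₁ + 2 * max (u s) ε + 1 := by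
  have hfirst : Icc s (s + 1) ⊆ Icc s (s + 2) := Icc_subset_Icc_right (by linarith)
  have hsecond : Icc (s + 1) (s + 2) ⊆ Icc s (s + 2) := Icc_subset_Icc_left (by linarith)
  have hmid : s + 1 ∈ Icc s (s + 2) := ⟨by linarith, by linarith⟩
  have hu₂mid := (h.mono hfirst).second_le_sub_inv_sq hK₁ (fun y hy => hpos y (hfirst hy))
    (fun y hy => hu₁ y (hfirst hy)) (fun y hy => hu₃ y (hfirst hy))
  have hu₃le : ∀ y ∈ Ico (s + 1) (s + 2), u₃ y ≤ C := fun y hy => by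
    have hy' := hsecond (Ico_subset_Icc_self hy)
    have : 0 < 1 / max (u y) ε ^ 3 := one_div_pos.2 (pow_pos (hpos y hy') 3)
    linarith [hu₃ y hy']
  have hlast := ((h.mono hsecond).le_taylor hu₃le (s + 2) (right_mem_Icc.2 (by linarith))).2.2
  have humid := le_add_mul_of_hasDerivAt_le h.hasDerivAt
    (fun y hy => hu₁ y (Ico_subset_Icc_self hy)) _ hmid
  rw [show s + 2 - (s + 1) = 1 by ring] at hlast
  rw [show s + 1 - s = 1 by ring] at humid
  linarith [hu₁ _ hmid, le_max_left (u s) ε]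

theorem le_of_third_le {C M S : ℝ} (h : JetOn u u₁ u₂ u₃ (Icc s t)) (hC : 0 ≤ C) (hM : 0 ≤ M)
    (hS : t - s ≤ S) (hs₁ : u₁ s ≤ M) (hs₂ : u₂ s ≤ M) (hu₃ : ∀ y ∈ Icc s t, u₃ y ≤ C) :
    ∀ y ∈ Icc s t, u₂ y ≤ M + C * S ∧ u₁ y ≤ M + (M + C * S) * S := by
  have hu₂ : ∀ y ∈ Icc s t, u₂ y ≤ M + C * S := fun y hy => by
    have := le_add_mul_of_hasDerivAt_le h.hasDerivAt₂
      (fun z hz => hu₃ z (Ico_subset_Icc_self hz)) y hy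
    have : C * (y - s) ≤ C * S := mul_le_mul_of_nonneg_left (by linarith [hy.2]) hC
    linarith
  refine fun y hy => ⟨hu₂ y hy, ?_⟩
  have hS₀ : 0 ≤ S := by linarith [hy.1, hy.2]
  have := le_add_mul_of_hasDerivAt_le h.hasDerivAt₁
    (fun z hz => hu₂ z (Ico_subset_Icc_self hz)) y hy
  have : (M + C * S) * (y - s) ≤ (M + C * S) * S :=
    mul_le_mul_of_nonneg_left (by linarith [hy.2]) (by positivity)
  linarith

theorem exists_pos_forall_le_max {C M S : ℝ} (hC : 0 ≤ C) (hM : 1 ≤ M) (hS : 0 ≤ S) :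
    ∃ m > 0, ∀ {u u₁ u₂ u₃ : ℝ → ℝ} {s t ε : ℝ}, JetOn u u₁ u₂ u₃ (Icc s t) → t - s ≤ S →
      u₁ s ≤ M → u₂ s ≤ M → (∀ y ∈ Icc s t, 0 ≤ u y) → (∀ y ∈ Icc s t, 0 < max (u y) ε) →
      (∀ y ∈ Icc s t, u₃ y ≤ C - 1 / max (u y) ε ^ 3) → ∀ y ∈ Icc s (t - 2), m ≤ max (u y) ε := by
  set K₂ := M + C * S
  have hK₂ : 1 ≤ K₂ := le_add_of_le_of_nonneg hM (by positivity)
  set K₁ := M + K₂ * S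
  have hK₁ : 1 ≤ K₁ := le_add_of_le_of_nonneg hM (by positivity)
  set N := K₂ + 2 * C + 4 * K₁ + 3
  have hN : 1 ≤ N := by simp only [N]; linarith
  refine ⟨1 / (2 * K₁ * N), by positivity, ?_⟩
  intro u u₁ u₂ u₃ s t ε h hS' hs₁ hs₂ hu hpos hu₃ y hy
  have hu₃le : ∀ z ∈ Icc s t, u₃ z ≤ C := fun z hz => by
    have : 0 < 1 / max (u z) ε ^ 3 := one_div_pos.2 (pow_pos (hpos z hz) 3)
    linarith [hu₃ z hz]
  have hbounds := h.le_of_third_le hC (by linarith) hS' hs₁ hs₂ hu₃le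
  have hsub : Icc y (y + 2) ⊆ Icc s t := Icc_subset_Icc hy.1 (by linarith [hy.2])
  have hy' : y ∈ Icc s t := hsub (left_mem_Icc.2 (by linarith))
  have hm : 0 < max (u y) ε := hpos y hy'
  have key := (h.mono hsub).inv_sq_le_of_le_sub_inv_cube hC hK₁ (fun z hz => hpos z (hsub hz))
    (fun z hz => (hbounds z (hsub hz)).2) (hbounds y hy').1 (fun z hz => hu₃ z (hsub hz))
    (hu _ (hsub (right_mem_Icc.2 (by linarith))))
  set m := max (u y) ε
  by_contra! hlt
  have hlt' : m * (2 * K₁ * N) < 1 := (lt_div_iff₀ (by positivity)).1 hlt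
  have hm1 : m < 1 := by nlinarith [one_le_mul_of_one_le_of_one_le hK₁ hN]
  rw [div_le_iff₀ (by positivity)] at key
  have hkey : 1 ≤ N * (2 * K₁ * m ^ 2) := by
    refine key.trans (mul_le_mul_of_nonneg_right ?_ (by positivity))
    simp only [N]
    linarith
  nlinarith

end JetOn

/-! ### Initial value problems and shooting thresholds -/

section InitialValueProblem

theorem abs_inv_cube_sub_inv_cube_le {ε x y : ℝ} (hε : 0 < ε) (hx : ε ≤ x) (hy : ε ≤ y) :
    |1 / x ^ 3 - 1 / y ^ 3| ≤ 3 / ε ^ 4 * |x - y| := by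
  have hx₀ : 0 < x := hε.trans_le hx
  have hy₀ : 0 < y := hε.trans_le hy
  have hfactor : 1 / x ^ 3 - 1 / y ^ 3 =
      (1 / (x * y ^ 3) + 1 / (x ^ 2 * y ^ 2) + 1 / (x ^ 3 * y)) * (y - x) := by
    field_simp
    ring
  rw [hfactor, abs_mul, abs_sub_comm y x, abs_of_pos (by positivity)]
  gcongr
  calc 1 / (x * y ^ 3) + 1 / (x ^ 2 * y ^ 2) + 1 / (x ^ 3 * y)
      ≤ 1 / (ε * ε ^ 3) + 1 / (ε ^ 2 * ε ^ 2) + 1 / (ε ^ 3 * ε) := by gcongr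
    _ = 3 / ε ^ 4 := by
      field_simp
      ring

theorem lipschitzWith_inv_max_cube {ε : ℝ} (hε : 0 < ε) :
    LipschitzWith (3 / ε ^ 4).toNNReal fun u : ℝ => 1 / max u ε ^ 3 := by
  refine LipschitzWith.of_dist_le_mul fun x y => ?_
  rw [Real.dist_eq, Real.dist_eq, Real.coe_toNNReal _ (by positivity)]
  exact (abs_inv_cube_sub_inv_cube_le hε (le_max_right _ _) (le_max_right _ _)).trans
    (mul_le_mul_of_nonneg_left (abs_max_sub_max_le_abs x y ε) (by positivity))

/-- The first-order field of `u''' = f y u` in the coordinates `(u, c u', c² u'')`. The scaling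
factor `c` makes the linear growth of the field as small as desired, so that the Picard–Lindelöf
theorem covers a prescribed interval. -/
noncomputable def scaledField (c : ℝ) (f : ℝ → ℝ → ℝ) (y : ℝ) (z : ℝ × ℝ × ℝ) : ℝ × ℝ × ℝ :=
  (z.2.1 / c, z.2.2 / c, c ^ 2 * f y z.1)

theorem lipschitzWith_scaledField {c K : NNReal} {f : ℝ → ℝ → ℝ} {y : ℝ}
    (hf : LipschitzWith K (f y)) :
    LipschitzWith (max c⁻¹ (max c⁻¹ (c ^ 2 * K))) (scaledField c f y) := by
  have hdiv : LipschitzWith c⁻¹ fun x : ℝ => x / c := by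
    simpa [div_eq_inv_mul] using lipschitzWith_smul (β := ℝ) (c : ℝ)⁻¹
  have hmul : LipschitzWith (c ^ 2) fun x : ℝ => (c : ℝ) ^ 2 * x :=
    LipschitzWith.of_dist_le_mul fun x y => by simp [Real.dist_eq, ← mul_sub, abs_mul]
  have hsnd : LipschitzWith 1 (Prod.snd : ℝ × ℝ × ℝ → ℝ × ℝ) := LipschitzWith.prod_snd
  have h₁ := hdiv.comp (LipschitzWith.prod_fst.comp hsnd)
  have h₂ := hdiv.comp (LipschitzWith.prod_snd.comp hsnd)
  have h₃ := hmul.comp (hf.comp (LipschitzWith.prod_fst (α := ℝ) (β := ℝ × ℝ)))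
  simp only [mul_one] at h₁ h₂ h₃
  exact h₁.prodMk (h₂.prodMk h₃)

theorem norm_scaledField_le {c A B q y : ℝ} {f : ℝ → ℝ → ℝ} {z z₀ : ℝ × ℝ × ℝ} (hc : 0 < c)
    (hz : z ∈ Metric.closedBall z₀ A) (hz₁ : z₀.2.1 = c * q) (hz₂ : z₀.2.2 = 0)
    (hB : |f y z.1| ≤ B) : ‖scaledField c f y z‖ ≤ |q| + A / c + c ^ 2 * B := by
  rw [Metric.mem_closedBall, Prod.dist_eq, Prod.dist_eq, max_le_iff, max_le_iff, hz₁, hz₂,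
    Real.dist_eq, Real.dist_eq, Real.dist_eq, sub_zero] at hz
  obtain ⟨-, hzq, hz₀⟩ := hz
  have hA : 0 ≤ A / c := div_nonneg ((abs_nonneg _).trans hz₀) hc.le
  have hB₀ : 0 ≤ c ^ 2 * B := mul_nonneg (sq_nonneg c) ((abs_nonneg _).trans hB)
  have h₁ : |z.2.1 / c| ≤ |q| + A / c := by
    rw [show z.2.1 / c = q + (z.2.1 - c * q) / c by field_simp; ring]
    refine (abs_add_le _ _).trans (add_le_add_right ?_ _)
    rw [abs_div, abs_of_pos hc]
    gcongr
  have h₂ : |z.2.2 / c| ≤ A / c := by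
    rw [abs_div, abs_of_pos hc]
    gcongr
  have h₃ : |c ^ 2 * f y z.1| ≤ c ^ 2 * B := by
    rw [abs_mul, abs_of_nonneg (sq_nonneg c)]
    gcongr
  have hq := abs_nonneg q
  exact max_le (h₁.trans (by linarith)) (max_le (h₂.trans (by linarith)) (h₃.trans (by linarith)))

variable {f : ℝ → ℝ → ℝ} {B p q s t : ℝ} {c K ρ : NNReal}

theorem isPicardLindelof_scaledField {A : NNReal} (hc : 0 < c)
    (hs : s ∈ Icc (s - 1) (t + 1)) (hst : s ≤ t) (hf : ∀ x, Continuous (f · x))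
    (hK : ∀ y, LipschitzWith K (f y)) (hB : ∀ y ∈ Icc (s - 1) (t + 1), ∀ x, |f y x| ≤ B)
    (hA : (|q| + A / c + c ^ 2 * B) * (t + 1 - s) ≤ A - c ^ 2 * ρ) :
    IsPicardLindelof (scaledField c f) ⟨s, hs⟩ (p, c * q, 0) A (c ^ 2 * ρ)
      (|q| + A / c + c ^ 2 * B).toNNReal (max c⁻¹ (max c⁻¹ (c ^ 2 * K))) := by
  have hB₀ : 0 ≤ B := (abs_nonneg _).trans (hB s hs 0)
  have hL : ((|q| + A / c + c ^ 2 * B).toNNReal : ℝ) = |q| + A / c + c ^ 2 * B :=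
    Real.coe_toNNReal _ (by positivity)
  refine ⟨fun y _ => (lipschitzWith_scaledField (hK y)).lipschitzOnWith, fun z _ => ?_,
    fun y hy z hz => ?_, ?_⟩
  · have := hf z.1
    unfold scaledField
    fun_prop
  · rw [hL]
    exact norm_scaledField_le hc hz rfl rfl (hB y hy _)
  · have hmax : max (t + 1 - s) (s - (s - 1)) = t + 1 - s := max_eq_left (by linarith)
    rw [hL, hmax]
    exact_mod_cast hA

theorem exists_jetOn_family_of_isPicardLindelof {A L : NNReal} (hc : 0 < c)
    (hs : s ∈ Icc (s - 1) (t + 1))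
    (h : IsPicardLindelof (scaledField c f) ⟨s, hs⟩ (p, c * q, 0) A (c ^ 2 * ρ) L K) :
    ∃ u u₁ u₂ : ℝ → ℝ → ℝ,
      ContinuousOn (fun z : ℝ × ℝ => u z.1 z.2) (Icc (-(ρ : ℝ)) ρ ×ˢ Icc s t) ∧
      ∀ r ∈ Icc (-(ρ : ℝ)) ρ, u r s = p ∧ u₁ r s = q ∧ u₂ r s = r ∧
        JetOn (u r) (u₁ r) (u₂ r) (fun y => f y (u r y)) (Icc s t) := by
  obtain ⟨α, hα, hαcont⟩ := h.exists_forall_mem_closedBall_eq_hasDerivWithinAt_continuousOn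
  have hball : ∀ r ∈ Icc (-(ρ : ℝ)) ρ, ((p, c * q, c ^ 2 * r) : ℝ × ℝ × ℝ) ∈
      Metric.closedBall ((p, c * q, 0) : ℝ × ℝ × ℝ) (c ^ 2 * ρ : NNReal) := fun r hr => by
    have : (c : ℝ) ^ 2 * |r| ≤ c ^ 2 * ρ := by gcongr; exact abs_le.2 hr
    simpa [Prod.dist_eq, Real.dist_eq, abs_mul] using And.intro (by positivity) this
  have hderiv : ∀ r ∈ Icc (-(ρ : ℝ)) ρ, ∀ y ∈ Icc s t,
      HasDerivAt (fun y => α ((p, c * q, c ^ 2 * r), y))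
        (scaledField c f y (α ((p, c * q, c ^ 2 * r), y))) y := fun r hr y hy =>
    ((hα _ (hball r hr)).2 y ⟨by linarith [hy.1], by linarith [hy.2]⟩).hasDerivAt
      (Icc_mem_nhds (by linarith [hy.1]) (by linarith [hy.2]))
  refine ⟨fun r y => (α ((p, c * q, c ^ 2 * r), y)).1,
    fun r y => (α ((p, c * q, c ^ 2 * r), y)).2.1 / c,
    fun r y => (α ((p, c * q, c ^ 2 * r), y)).2.2 / c ^ 2, ?_, fun r hr => ?_⟩
  · refine continuous_fst.comp_continuousOn (hαcont.comp (by fun_prop) fun z hz => ?_)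
    exact ⟨hball _ hz.1, by linarith [hz.2.1], by linarith [hz.2.2]⟩
  · have hinit : α ((p, c * q, c ^ 2 * r), s) = (p, c * q, c ^ 2 * r) := (hα _ (hball r hr)).1
    refine ⟨by simp [hinit], by simp [hinit, hc.ne'], by simp [hinit, hc.ne'],
      fun y hy => (hderiv r hr y hy).fst, fun y hy => ?_, fun y hy => ?_⟩
    · exact (HasDerivAt.div_const (hderiv r hr y hy).snd.fst _).congr_deriv
        (by simp [scaledField]; field_simp)
    · exact (HasDerivAt.div_const (hderiv r hr y hy).snd.snd _).congr_deriv
        (by simp [scaledField]; field_simp)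

theorem exists_jetOn_family {ρ : ℝ} (hst : s ≤ t) (hρ : 0 ≤ ρ) (hf : ∀ x, Continuous (f · x))
    (hK : ∀ y, LipschitzWith K (f y)) (hB : ∀ y ∈ Icc (s - 1) (t + 1), ∀ x, |f y x| ≤ B) :
    ∃ u u₁ u₂ : ℝ → ℝ → ℝ, ContinuousOn (fun z : ℝ × ℝ => u z.1 z.2) (Icc (-ρ) ρ ×ˢ Icc s t) ∧
      ∀ r ∈ Icc (-ρ) ρ, u r s = p ∧ u₁ r s = q ∧ u₂ r s = r ∧
        JetOn (u r) (u₁ r) (u₂ r) (fun y => f y (u r y)) (Icc s t) := by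
  have hs : s ∈ Icc (s - 1) (t + 1) := ⟨by linarith, by linarith⟩
  have hB₀ : 0 ≤ B := (abs_nonneg _).trans (hB s hs 0)
  lift ρ to NNReal using hρ
  obtain ⟨ℓ, hℓ⟩ : ∃ ℓ : NNReal, (ℓ : ℝ) = t + 1 - s := ⟨⟨t + 1 - s, by linarith⟩, rfl⟩
  have hℓ₀ : (0 : ℝ) < ℓ := by linarith
  obtain ⟨A, hA⟩ : ∃ A : NNReal, (A : ℝ) = 2 * (|q| * ℓ + 4 * ℓ ^ 3 * B + 4 * ℓ ^ 2 * ρ) :=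
    ⟨⟨_, by positivity⟩, rfl⟩
  have hc : 0 < 2 * ℓ := by exact_mod_cast (by linarith : (0 : ℝ) < 2 * ℓ)
  refine exists_jetOn_family_of_isPicardLindelof hc hs
    (isPicardLindelof_scaledField (A := A) hc hs hst hf hK hB ?_)
  rw [← hℓ, hA]
  push_cast
  apply le_of_eq
  field_simp
  ring

end InitialValueProblem

section Threshold

theorem exists_nonneg_forall_and_eq_zero {X Y : Type*} [ConditionallyCompleteLinearOrder X]
    [TopologicalSpace X] [OrderTopology X] [DenselyOrdered X] [TopologicalSpace Y] {F : X → Y → ℝ}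
    {r₀ r₁ : X} {S : Set Y} (hr : r₀ ≤ r₁) (hS : IsCompact S)
    (hF : ContinuousOn (fun z : X × Y => F z.1 z.2) (Icc r₀ r₁ ×ˢ S))
    (h₀ : ∃ y ∈ S, F r₀ y ≤ 0) (h₁ : ∀ y ∈ S, 0 ≤ F r₁ y) :
    ∃ r ∈ Icc r₀ r₁, (∀ y ∈ S, 0 ≤ F r y) ∧ ∃ y ∈ S, F r y = 0 := by
  have : CompactSpace S := isCompact_iff_compactSpace.1 hS
  obtain ⟨y₀, hy₀, hFy₀⟩ := h₀
  have hcont : Continuous fun z : Icc r₀ r₁ × S => F z.1 z.2 :=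
    hF.comp_continuous (f := fun z : Icc r₀ r₁ × S => ((z.1 : X), (z.2 : Y))) (by fun_prop)
      fun z => ⟨z.1.2, z.2.2⟩
  have hslice : ∀ r : Icc r₀ r₁, IsCompact ((fun y : S => F r y) '' univ) := fun r =>
    isCompact_univ.image (hcont.comp (Continuous.prodMk_right r))
  have hne : (univ : Set S).Nonempty := ⟨⟨y₀, hy₀⟩, mem_univ _⟩
  have hInf : ContinuousOn (fun r => sInf ((fun y : S => F r y) '' univ)) (Icc r₀ r₁) :=
    continuousOn_iff_continuous_domRestrict.2 (isCompact_univ.continuous_sInf hcont)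
  have hle : ∀ r ∈ Icc r₀ r₁, ∀ y ∈ S, sInf ((fun y : S => F r y) '' univ) ≤ F r y :=
    fun r hr y hy => csInf_le (hslice ⟨r, hr⟩).bddBelow ⟨⟨y, hy⟩, mem_univ _, rfl⟩
  obtain ⟨r, hr, hr0⟩ := intermediate_value_Icc hr hInf
    ⟨(hle r₀ (left_mem_Icc.2 hr) y₀ hy₀).trans hFy₀,
      le_csInf (hne.image _) (forall_mem_image.2 fun y _ => h₁ y y.2)⟩
  obtain ⟨y, -, hy⟩ := (hslice ⟨r, hr⟩).sInf_mem (hne.image _)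
  exact ⟨r, hr, fun y hy => hr0 ▸ hle r hr y hy, y, y.2, hy.trans hr0⟩

end Threshold

/-! ### Shooting for the profile equation -/

/-- The right-hand side of the profile equation `u''' = y² + a - 1/u³`, with the singularity cut
off at height `ε` so that it is globally Lipschitz in `u`. -/
noncomputable def cutoffForcing (a ε y u : ℝ) : ℝ :=
  y ^ 2 + a - 1 / max u ε ^ 3

/-- `u` is a positive solution on `s` of the profile equation `u''' = y² + a - 1/u³`, to which
system (D) reduces; `u₁` and `u₂` are its first two derivatives. -/
structure IsProfileOn (a : ℝ) (u u₁ u₂ : ℝ → ℝ) (s : Set ℝ) : Prop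
    extends JetOn u u₁ u₂ (fun y => y ^ 2 + a - 1 / u y ^ 3) s where
  pos : ∀ y ∈ s, 0 < u y

/-- The profile is increasing, convex and has positive third derivative at `y`. For `0 ≤ y`
this persists, so that the profile then increases forever. -/
def IsEscaping (a : ℝ) (u u₁ u₂ : ℝ → ℝ) (y : ℝ) : Prop :=
  0 < u₁ y ∧ 0 < u₂ y ∧ 1 / u y ^ 3 < y ^ 2 + a

theorem IsProfileOn.mono {a : ℝ} {u u₁ u₂ : ℝ → ℝ} {S T : Set ℝ} (h : IsProfileOn a u u₁ u₂ T)
    (hST : S ⊆ T) : IsProfileOn a u u₁ u₂ S :=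
  ⟨h.toJetOn.mono hST, fun y hy => h.pos y (hST hy)⟩

section Shooting

variable {a n p q ε ρ : ℝ} {u u₁ u₂ : ℝ → ℝ}

theorem cutoffForcing_le {y : ℝ} (hε : 0 < ε) (hy : y ∈ Icc (-n) n) (x : ℝ) :
    cutoffForcing a ε y x ≤ n ^ 2 + |a| - 1 / max x ε ^ 3 ∧
      cutoffForcing a ε y x ≤ n ^ 2 + |a| := by
  have hy2 : y ^ 2 ≤ n ^ 2 := sq_le_sq' hy.1 hy.2
  have hinv : 0 < 1 / max x ε ^ 3 := one_div_pos.2 (pow_pos (lt_max_of_lt_right hε) 3)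
  have ha := le_abs_self a
  unfold cutoffForcing
  constructor <;> linarith

theorem neg_le_cutoffForcing {x y : ℝ} (hp : 0 < p) (hpx : p ≤ x) :
    -(|a| + 1 / p ^ 3) ≤ cutoffForcing a ε y x := by
  have hinv : 1 / max x ε ^ 3 ≤ 1 / p ^ 3 := by
    gcongr
    exact hpx.trans (le_max_left _ _)
  unfold cutoffForcing
  linarith [sq_nonneg y, neg_abs_le a]

theorem abs_cutoffForcing_le {y : ℝ} (hε : 0 < ε) (hy : y ∈ Icc (-n) n) (x : ℝ) :
    |cutoffForcing a ε y x| ≤ n ^ 2 + |a| + 1 / ε ^ 3 := by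
  have hinv : 0 < 1 / ε ^ 3 := by positivity
  have hlow : -(|a| + 1 / ε ^ 3) ≤ cutoffForcing a ε y x := by
    simpa [cutoffForcing] using
      neg_le_cutoffForcing (a := a) (ε := ε) (y := y) hε (le_max_right x ε)
  exact abs_le.2 ⟨by linarith [sq_nonneg n], by linarith [(cutoffForcing_le hε hy x (a := a)).2]⟩

theorem lipschitzWith_cutoffForcing (hε : 0 < ε) (y : ℝ) :
    LipschitzWith (3 / ε ^ 4).toNNReal (cutoffForcing a ε y) := by
  refine LipschitzWith.of_dist_le_mul fun x z => ?_
  unfold cutoffForcing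
  rw [dist_sub_left]
  exact (lipschitzWith_inv_max_cube hε).dist_le_mul x z

theorem JetOn.neg_of_second_le {u₃ : ℝ → ℝ} {C : ℝ} (h : JetOn u u₁ u₂ u₃ (Icc (-n) n)) (hn : 1 ≤ n)
    (hC : 0 ≤ C) (hu : 0 < u (-n)) (hu₁ : 0 < u₁ (-n))
    (hu₂ : u₂ (-n) ≤ -(2 * n * C + 2 + u (-n) + 2 * n * u₁ (-n)))
    (hu₃ : ∀ y ∈ Icc (-n) n, u₃ y ≤ C) : u n < 0 := by
  have htaylor := (h.le_taylor (fun y hy => hu₃ y (Ico_subset_Icc_self hy)) n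
    (right_mem_Icc.2 (by linarith))).2.2
  rw [show n - -n = 2 * n by ring] at htaylor
  have hnC : 0 ≤ C * n ^ 3 := by positivity
  have hsq : 0 ≤ (n ^ 2 - 1) * (2 + u (-n) + 2 * n * u₁ (-n)) :=
    mul_nonneg (by nlinarith) (by positivity)
  have hstep := mul_le_mul_of_nonneg_right hu₂ (by positivity : 0 ≤ 2 * n ^ 2)
  have : 0 < n * u₁ (-n) := by positivity
  nlinarith

theorem exists_cutoff_jetOn_and_eq_zero (a : ℝ) (hn : 1 ≤ n) (hp : 0 < p) (hq : 0 < q) :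
    ∃ ρ ≥ 0, ∀ ε > 0, ∃ u u₁ u₂ : ℝ → ℝ,
      JetOn u u₁ u₂ (fun y => cutoffForcing a ε y (u y)) (Icc (-n) n) ∧
      u (-n) = p ∧ u₁ (-n) = q ∧ u₂ (-n) ≤ ρ ∧
      (∀ y ∈ Icc (-n) n, 0 ≤ u y) ∧ ∃ y ∈ Icc (-n) n, u y = 0 := by
  have hn₀ : -n ≤ n := by linarith
  have hA : 0 ≤ 2 * n * (n ^ 2 + |a|) := by positivity
  have hD : 0 ≤ 2 * n * (|a| + 1 / p ^ 3) := by positivity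
  have hE : 0 ≤ 2 * n * q := by positivity
  obtain ⟨ρ, hρ⟩ : ∃ ρ, ρ = 2 * n * (n ^ 2 + |a|) + 2 + p + 2 * n * q + 2 * n * (|a| + 1 / p ^ 3) :=
    ⟨_, rfl⟩
  have hρ₀ : 0 ≤ ρ := by linarith
  refine ⟨ρ, hρ₀, fun ε hε => ?_⟩
  obtain ⟨u, u₁, u₂, hcont, hsol⟩ := exists_jetOn_family (f := cutoffForcing a ε) (p := p) (q := q)
    hn₀ hρ₀ (fun x => by unfold cutoffForcing; fun_prop) (lipschitzWith_cutoffForcing hε)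
    (fun y hy x => abs_cutoffForcing_le (n := n + 1) hε (by grind) x)
  have hdown : u (-ρ) n ≤ 0 := by
    obtain ⟨h₀, h₁, h₂, h⟩ := hsol (-ρ) ⟨le_rfl, by linarith⟩
    refine (h.neg_of_second_le hn (by positivity) (by rwa [h₀]) (by rwa [h₁]) ?_
      fun y hy => (cutoffForcing_le hε hy _).2).le
    rw [h₀, h₁, h₂]
    linarith
  have hup : ∀ y ∈ Icc (-n) n, 0 ≤ u ρ y := fun y hy => by
    obtain ⟨h₀, h₁, h₂, h⟩ := hsol ρ ⟨by linarith, le_rfl⟩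
    have := (h.le_of_neg_le (c := |a| + 1 / p ^ 3) (by linarith) (by positivity) (by linarith)
      (fun z _ hz => neg_le_cutoffForcing hp (by rwa [h₀] at hz)) y hy).1
    linarith
  obtain ⟨r, hr, hnonneg, hzero⟩ := exists_nonneg_forall_and_eq_zero (F := u) (by linarith)
    isCompact_Icc hcont ⟨n, right_mem_Icc.2 hn₀, hdown⟩ hup
  obtain ⟨h₀, h₁, h₂, h⟩ := hsol r hr
  exact ⟨u r, u₁ r, u₂ r, h, h₀, h₁, h₂.trans_le hr.2, hnonneg, hzero⟩

theorem le_of_isEscaping {s t : ℝ}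
    (h : JetOn u u₁ u₂ (fun y => cutoffForcing a ε y (u y)) (Icc s t)) (hs : 0 ≤ s)
    (hpos : 0 < u s) (hesc : IsEscaping a u u₁ u₂ s) : ∀ y ∈ Icc s t, u s ≤ u y := by
  refine fun y hy => (h.le_of_neg_le (c := 0) hesc.1.le le_rfl (by linarith [hesc.2.1])
    (fun z hz hle => ?_) y hy).1
  have hinv : 1 / max (u z) ε ^ 3 ≤ 1 / u s ^ 3 := by
    gcongr
    exact hle.trans (le_max_left _ _)
  have hsq : s ^ 2 ≤ z ^ 2 := pow_le_pow_left₀ hs hz.1 2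
  unfold cutoffForcing
  linarith [hesc.2.2]

theorem exists_isProfileOn_not_isEscaping (a : ℝ) (hn : 1 ≤ n) (hp : 0 < p) (hq : 0 < q) :
    ∃ u u₁ u₂ : ℝ → ℝ, IsProfileOn a u u₁ u₂ (Icc (-n) (n - 2)) ∧ u (-n) = p ∧ u₁ (-n) = q ∧
      ∀ y ∈ Icc 0 (n - 2), ¬ IsEscaping a u u₁ u₂ y := by
  obtain ⟨ρ, hρ, hρsol⟩ := exists_cutoff_jetOn_and_eq_zero a hn hp hq
  obtain ⟨m, hm, hlow⟩ := JetOn.exists_pos_forall_le_max (C := n ^ 2 + |a|) (M := ρ + q + 1)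
    (S := 2 * n) (by positivity) (by linarith) (by linarith)
  obtain ⟨u, u₁, u₂, h, h₀, h₁, h₂, hnonneg, s, hs, hus⟩ := hρsol (m / 2) (half_pos hm)
  have hge : ∀ y ∈ Icc (-n) (n - 2), m ≤ u y := fun y hy => by
    refine (le_max_iff.1 (hlow h (by linarith) (by linarith) (by linarith) hnonneg
      (fun _ _ => lt_max_of_lt_right (half_pos hm))
      (fun z hz => (cutoffForcing_le (half_pos hm) hz _).1) y hy)).resolve_right (by linarith)
  have hsub : Icc (-n) (n - 2) ⊆ Icc (-n) n := Icc_subset_Icc_right (by linarith)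
  refine ⟨u, u₁, u₂, ⟨⟨(h.mono hsub).hasDerivAt, (h.mono hsub).hasDerivAt₁, fun y hy => ?_⟩,
    fun y hy => hm.trans_le (hge y hy)⟩, h₀, h₁, fun y hy hesc => ?_⟩
  · have := hge y hy
    simpa only [cutoffForcing, max_eq_left (by linarith : m / 2 ≤ u y)] using
      h.hasDerivAt₂ y (hsub hy)
  · have hy' : y ∈ Icc (-n) (n - 2) := ⟨by linarith [hy.1], hy.2⟩
    have huy := hge y hy'
    rcases le_total s y with hsy | hys
    · linarith [hge s ⟨hs.1, hsy.trans hy.2⟩]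
    · linarith [le_of_isEscaping (h.mono (Icc_subset_Icc_left hy'.1)) hy.1 (hm.trans_le huy) hesc s
        ⟨hys, hs.2⟩]

end Shooting

/-! ### The slow branch and the energy of a deviation -/

section SlowBranch

/-- The slow branch `(-y)^(-2/3)` of the profile equation, on which `y² = 1/u³`. Along the profile
constructed below it corresponds to the critical point `p₊`. -/
noncomputable def slowBranch (y : ℝ) : ℝ :=
  (-y) ^ (-(2 / 3) : ℝ)

/-- The first derivative of `slowBranch`, with the exponent `1` written out to match
`hasDerivAt_slowBranch_div_pow`. -/
noncomputable def slowBranch₁ (y : ℝ) : ℝ :=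
  2 / 3 * (slowBranch y / (-y) ^ 1)

/-- The second derivative of `slowBranch`. -/
noncomputable def slowBranch₂ (y : ℝ) : ℝ :=
  10 / 9 * (slowBranch y / (-y) ^ 2)

/-- The third derivative of `slowBranch`. -/
noncomputable def slowBranch₃ (y : ℝ) : ℝ :=
  80 / 27 * (slowBranch y / (-y) ^ 3)

variable {y : ℝ}

theorem slowBranch_pos (hy : y < 0) : 0 < slowBranch y :=
  Real.rpow_pos_of_pos (neg_pos.2 hy) _

theorem slowBranch_le_one (hy : y ≤ -1) : slowBranch y ≤ 1 :=
  Real.rpow_le_one_of_one_le_of_nonpos (by linarith) (by norm_num)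

theorem slowBranch_cube_mul_sq (hy : y < 0) : slowBranch y ^ 3 * y ^ 2 = 1 := by
  have hy' : 0 < -y := neg_pos.2 hy
  rw [← neg_sq, slowBranch, ← Real.rpow_mul_natCast hy'.le, ← Real.rpow_natCast,
    ← Real.rpow_add hy']
  norm_num

theorem one_div_mul_slowBranch_cube (hy : y < 0) (κ : ℝ) :
    1 / (κ * slowBranch y) ^ 3 = y ^ 2 / κ ^ 3 := by
  rw [mul_pow, ← one_div_mul_one_div, one_div (slowBranch y ^ 3),
    ← eq_inv_of_mul_eq_one_right (slowBranch_cube_mul_sq hy), one_div_mul_eq_div]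

theorem neg_le_sq_mul_slowBranch (hy : y ≤ -1) : -y ≤ y ^ 2 * slowBranch y := by
  have hle : (-y)⁻¹ ≤ slowBranch y := by
    rw [← Real.rpow_neg_one]
    exact Real.rpow_le_rpow_of_exponent_le (by linarith) (by norm_num)
  calc -y = y ^ 2 * (-y)⁻¹ := by
        have : y ≠ 0 := by linarith
        field_simp
    _ ≤ y ^ 2 * slowBranch y := by gcongr

theorem hasDerivAt_slowBranch (hy : y < 0) : HasDerivAt slowBranch (slowBranch₁ y) y := by
  have hy' : -y ≠ 0 := by linarith
  refine ((hasDerivAt_neg y).rpow_const (p := (-(2 / 3) : ℝ)) (Or.inl hy')).congr_deriv ?_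
  rw [Real.rpow_sub_one hy', slowBranch₁, slowBranch]
  ring

theorem hasDerivAt_slowBranch_div_pow (k : ℕ) (hy : y < 0) :
    HasDerivAt (fun z => slowBranch z / (-z) ^ k)
      ((k + 2 / 3) * (slowBranch y / (-y) ^ (k + 1))) y := by
  have hy' : -y ≠ 0 := by linarith
  refine ((hasDerivAt_slowBranch hy).fun_div ((hasDerivAt_neg y).fun_pow k)
    (pow_ne_zero k hy')).congr_deriv ?_
  rcases k with _ | k
  · simp [slowBranch₁]
  · rw [slowBranch₁, add_tsub_cancel_right]
    have : y ≠ 0 := hy.ne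
    field_simp
    push_cast
    ring

theorem jetOn_slowBranch : JetOn slowBranch slowBranch₁ slowBranch₂ slowBranch₃ (Iio 0) where
  hasDerivAt _ hy := hasDerivAt_slowBranch hy
  hasDerivAt₁ _ hy := ((hasDerivAt_slowBranch_div_pow 1 hy).const_mul _).congr_deriv
    (by rw [slowBranch₂]; ring)
  hasDerivAt₂ _ hy := ((hasDerivAt_slowBranch_div_pow 2 hy).const_mul _).congr_deriv
    (by rw [slowBranch₃]; ring)

theorem hasDerivAt_slowBranch₃ (hy : y < 0) :
    HasDerivAt slowBranch₃ (880 / 81 * (slowBranch y / (-y) ^ 4)) y :=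
  ((hasDerivAt_slowBranch_div_pow 3 hy).const_mul _).congr_deriv (by ring)

theorem slowBranch₁_pos (hy : y < 0) : 0 < slowBranch₁ y := by
  have := slowBranch_pos hy
  have : 0 < -y := neg_pos.2 hy
  unfold slowBranch₁
  positivity

theorem slowBranch₂_pos (hy : y < 0) : 0 < slowBranch₂ y := by
  have := slowBranch_pos hy
  have : 0 < -y := neg_pos.2 hy
  unfold slowBranch₂
  positivity

end SlowBranch

section Energy

/-- The part of the energy of `u - slowBranch` coming from the force `y² - 1/u³`, normalised to
vanish at `u = slowBranch y`. -/
noncomputable def potential (y u : ℝ) : ℝ :=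
  y ^ 2 * u + 1 / (2 * u ^ 2) - 3 / 2 * (y ^ 2 * slowBranch y)

/-- An energy of the deviation `v = u - slowBranch` that does not decrease as long as
`|v| ≤ slowBranch / 2`. The product `v' v''` replaces the kinetic energy of a second-order
equation, and `- 6 / y` absorbs the drift of the third derivative of `slowBranch`. -/
noncomputable def deviationEnergy (a : ℝ) (u u₁ u₂ : ℝ → ℝ) (y : ℝ) : ℝ :=
  (u₁ y - slowBranch₁ y) * (u₂ y - slowBranch₂ y) - potential y (u y) +
    (slowBranch₃ y - a) * (u y - slowBranch y) - 6 / y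

variable {a y y₀ y₁ δ : ℝ} {u u₁ u₂ : ℝ → ℝ}

theorem potential_eq {x : ℝ} (hy : y < 0) (hx : 0 < x) :
    potential y x =
      y ^ 2 * (x - slowBranch y) ^ 2 * ((2 * x + slowBranch y) / (2 * x ^ 2)) := by
  have := slowBranch_cube_mul_sq hy
  unfold potential
  field_simp
  linear_combination -this

theorem potential_slowBranch (hy : y < 0) : potential y (slowBranch y) = 0 := by
  rw [potential_eq hy (slowBranch_pos hy)]
  ring

theorem le_potential {x : ℝ} (hy : y ≤ -1) (hx : 0 < x) (hδ : δ ≤ 1 / 2)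
    (hdev : |x - slowBranch y| = δ * slowBranch y) : δ ^ 2 / 2 * -y ≤ potential y x := by
  have hy₀ : y < 0 := by linarith
  have hs := slowBranch_pos hy₀
  have hle : x ≤ 3 / 2 * slowBranch y := by
    have := mul_le_mul_of_nonneg_right hδ hs.le
    linarith [le_abs_self (x - slowBranch y)]
  have hquot : 1 / 2 / slowBranch y ≤ (2 * x + slowBranch y) / (2 * x ^ 2) := by
    rw [div_le_div_iff₀ hs (by positivity)]
    nlinarith [mul_pos hx hs]
  rw [potential_eq hy₀ hx, ← sq_abs (x - slowBranch y), hdev]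
  calc δ ^ 2 / 2 * -y ≤ δ ^ 2 / 2 * (y ^ 2 * slowBranch y) := by
        gcongr
        exact neg_le_sq_mul_slowBranch hy
    _ = y ^ 2 * (δ * slowBranch y) ^ 2 * (1 / 2 / slowBranch y) := by field_simp
    _ ≤ _ := by gcongr

theorem hasDerivAt_deviationEnergy {S : Set ℝ} (h : IsProfileOn a u u₁ u₂ S) (hyS : y ∈ S)
    (hy : y < 0) :
    HasDerivAt (deviationEnergy a u u₁ u₂) ((u₂ y - slowBranch₂ y) ^ 2 +
      (2 * -y * (u y - slowBranch y) - slowBranch₁ y * (y ^ 2 - 1 / u y ^ 3) +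
        880 / 81 * (slowBranch y / (-y) ^ 4) * (u y - slowBranch y) + 6 / y ^ 2)) y := by
  have hpos := h.pos y hyS
  have hu := h.hasDerivAt y hyS
  have hv := hu.sub (hasDerivAt_slowBranch hy)
  have hv₁ := (h.hasDerivAt₁ y hyS).sub (jetOn_slowBranch.hasDerivAt₁ y hy)
  have hv₂ := (h.hasDerivAt₂ y hyS).sub (jetOn_slowBranch.hasDerivAt₂ y hy)
  have hsq : HasDerivAt (fun y : ℝ => y ^ 2) (2 * y) y := by simpa using hasDerivAt_pow 2 y
  have hinv := (hasDerivAt_const y (1 : ℝ)).fun_div ((hu.fun_pow 2).const_mul 2) (by positivity)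
  have hpot := ((hsq.fun_mul hu).fun_add hinv).fun_sub
    ((hsq.fun_mul (hasDerivAt_slowBranch hy)).const_mul (3 / 2))
  have hinv₆ := (hasDerivAt_const y (6 : ℝ)).fun_div (hasDerivAt_id y) hy.ne
  refine ((((hv₁.mul hv₂).sub hpot).add
    (((hasDerivAt_slowBranch₃ hy).sub_const a).mul hv)).sub hinv₆).congr_deriv ?_
  simp only [Pi.sub_apply, id, slowBranch₁]
  have : y ≠ 0 := hy.ne
  field_simp
  ring

theorem deviationEnergy_drift_nonneg {x : ℝ} (hy : y ≤ -1) (hx : 0 < x)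
    (hdev : |x - slowBranch y| ≤ 1 / 2 * slowBranch y) :
    0 ≤ 2 * -y * (x - slowBranch y) - slowBranch₁ y * (y ^ 2 - 1 / x ^ 3) +
      880 / 81 * (slowBranch y / (-y) ^ 4) * (x - slowBranch y) + 6 / y ^ 2 := by
  have hy₀ : y < 0 := by linarith
  have hy' : 0 < -y := neg_pos.2 hy₀
  have hs := slowBranch_pos hy₀
  have hs₁ := slowBranch_le_one hy
  have hcube := slowBranch_cube_mul_sq hy₀
  have hforce : 2 * -y * (x - slowBranch y) - slowBranch₁ y * (y ^ 2 - 1 / x ^ 3) =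
      2 * -y / (3 * x ^ 3) *
        ((x - slowBranch y) ^ 2 * (3 * x ^ 2 + 2 * x * slowBranch y + slowBranch y ^ 2)) := by
    unfold slowBranch₁
    have : y ≠ 0 := hy₀.ne
    field_simp
    linear_combination slowBranch y * hcube
  have hrest : 880 / 81 * (slowBranch y / (-y) ^ 4) * (x - slowBranch y) + 6 / y ^ 2 =
      (880 / 81 * (slowBranch y * (x - slowBranch y)) + 6 * y ^ 2) / y ^ 4 := by
    field_simp
  have hrest₀ : 0 ≤ 880 / 81 * (slowBranch y * (x - slowBranch y)) + 6 * y ^ 2 := by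
    have hsq : 1 ≤ y ^ 2 := by nlinarith
    have : -(1 / 2) ≤ slowBranch y * (x - slowBranch y) := by nlinarith [(abs_le.1 hdev).1]
    linarith
  rw [hforce, add_assoc, hrest]
  positivity

theorem deviationEnergy_nonneg (h : IsProfileOn a u u₁ u₂ (Icc y₀ y₁)) (hy₁ : y₁ ≤ -1)
    (hu : u y₀ = slowBranch y₀) (hu₁ : u₁ y₀ = slowBranch₁ y₀)
    (hdev : ∀ y ∈ Icc y₀ y₁, |u y - slowBranch y| ≤ 1 / 2 * slowBranch y) :
    ∀ y ∈ Icc y₀ y₁, 0 ≤ deviationEnergy a u u₁ u₂ y := by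
  intro y hy
  have hy₀ : y₀ < 0 := by linarith [hy.1, hy.2]
  have hmono := le_of_hasDerivAt_nonneg
    (fun z hz => hasDerivAt_deviationEnergy h hz (by linarith [hz.2]))
    (fun z hz => add_nonneg (sq_nonneg _) (deviationEnergy_drift_nonneg (by linarith [hz.2])
      (h.pos z (Ico_subset_Icc_self hz)) (hdev z (Ico_subset_Icc_self hz)))) y hy
  have hinit : deviationEnergy a u u₁ u₂ y₀ = -(6 / y₀) := by
    simp [deviationEnergy, hu, hu₁, potential_slowBranch hy₀]
  have : 6 / y₀ ≤ 0 := div_nonpos_of_nonneg_of_nonpos (by norm_num) hy₀.le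
  linarith

theorem potential_sub_le_mul_of_deviationEnergy_nonneg (hy : y ≤ -1)
    (hdev : |u y - slowBranch y| ≤ 1) (hE : 0 ≤ deviationEnergy a u u₁ u₂ y) :
    potential y (u y) - 10 - |a| ≤ (u₁ y - slowBranch₁ y) * (u₂ y - slowBranch₂ y) := by
  have hs := slowBranch_pos (show y < 0 by linarith)
  have hinv : -6 ≤ 6 / y := by
    rw [le_div_iff_of_neg (by linarith)]
    linarith
  have hs₃ : |slowBranch₃ y| ≤ 3 := by
    have hpow : 1 ≤ (-y) ^ 3 := one_le_pow₀ (by linarith)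
    have : slowBranch y / (-y) ^ 3 ≤ 1 :=
      (div_le_one (by positivity)).2 ((slowBranch_le_one hy).trans hpow)
    have : 0 ≤ slowBranch y / (-y) ^ 3 := by positivity
    rw [slowBranch₃, abs_of_nonneg (by positivity)]
    linarith
  have hcross : |(slowBranch₃ y - a) * (u y - slowBranch y)| ≤ (3 + |a|) * 1 := by
    rw [abs_mul]
    gcongr
    exact (abs_sub _ _).trans (by gcongr)
  unfold deviationEnergy at hE
  linarith [le_abs_self ((slowBranch₃ y - a) * (u y - slowBranch y))]

theorem deviation_mul_pos_of_abs_sub_eq (h : IsProfileOn a u u₁ u₂ (Icc y₀ y₁)) (hy₁ : y₁ ≤ -1)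
    (hy₀ : y₀ ≤ y₁) (hu : u y₀ = slowBranch y₀) (hu₁ : u₁ y₀ = slowBranch₁ y₀)
    (hdev : ∀ y ∈ Icc y₀ y₁, |u y - slowBranch y| ≤ 1 / 2 * slowBranch y) (hδ : δ ≤ 1 / 2)
    (heq : |u y₁ - slowBranch y₁| = δ * slowBranch y₁) (hlarge : |a| + 10 < δ ^ 2 / 2 * -y₁) :
    0 < (u₁ y₁ - slowBranch₁ y₁) * (u₂ y₁ - slowBranch₂ y₁) := by
  have hmem : y₁ ∈ Icc y₀ y₁ := right_mem_Icc.2 hy₀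
  have hE := deviationEnergy_nonneg h hy₁ hu hu₁ hdev y₁ hmem
  have hdev₁ : |u y₁ - slowBranch y₁| ≤ 1 := by linarith [hdev y₁ hmem, slowBranch_le_one hy₁]
  linarith [potential_sub_le_mul_of_deviationEnergy_nonneg hy₁ hdev₁ hE,
    le_potential hy₁ (h.pos y₁ hmem) hδ heq]

end Energy

/-! ### Trapping near the slow branch -/

section Trapping

variable {a y y₀ y₁ δ : ℝ} {u u₁ u₂ : ℝ → ℝ}

theorem le_pow_mul_pow_of_le {L d x : ℝ} {i j k l : ℕ} (h : L ≤ d ^ k * x ^ l) (hd : 0 ≤ d)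
    (hd₁ : d ≤ 1) (hx : 1 ≤ x) (hik : i ≤ k) (hlj : l ≤ j) : L ≤ d ^ i * x ^ j :=
  h.trans (mul_le_mul (pow_le_pow_of_le_one hd hd₁ hik) (pow_le_pow_right₀ hx hlj)
    (by positivity) (by positivity))

theorem le_force_of_slowBranch_le {x : ℝ} (hδ : 0 < δ) (hδ₁ : δ ≤ 1 / 2) (hy₁ : y₁ < 0)
    (ha : 8 * |a| ≤ δ * y₁ ^ 2) (hy : y ≤ (1 - δ / 8) * y₁)
    (hx : (1 + δ) * slowBranch y₁ ≤ x) : δ / 8 * y₁ ^ 2 ≤ y ^ 2 + a - 1 / x ^ 3 := by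
  have hs := slowBranch_pos hy₁
  have hinv : 1 / x ^ 3 ≤ y₁ ^ 2 * (1 - δ / 2) := calc
    1 / x ^ 3 ≤ 1 / ((1 + δ) * slowBranch y₁) ^ 3 := by gcongr
    _ = y₁ ^ 2 / (1 + δ) ^ 3 := one_div_mul_slowBranch_cube hy₁ _
    _ ≤ y₁ ^ 2 * (1 - δ / 2) := by
      have : 1 ≤ (1 - δ / 2) * (1 + δ) ^ 3 := by
        have : 1 ≤ (1 - δ / 2) * (1 + δ) := by nlinarith
        have : 1 ≤ (1 + δ) ^ 2 := by nlinarith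
        nlinarith
      rw [div_le_iff₀ (by positivity), mul_assoc]
      exact le_mul_of_one_le_right (sq_nonneg _) this
  have hsq : y₁ ^ 2 * (1 - δ / 4) ≤ y ^ 2 := by
    have : 0 ≤ (1 - δ / 8) * -y₁ := mul_nonneg (by linarith) (by linarith)
    nlinarith [sq_nonneg (y₁ * δ)]
  linarith [neg_abs_le a]

theorem force_le_of_le_slowBranch {x : ℝ} (hδ : 0 < δ) (hδ₁ : δ ≤ 1 / 2) (hy₁ : y₁ < 0)
    (ha : 4 * |a| ≤ δ * y₁ ^ 2) (hy : y ∈ Icc y₁ 0) (hx₀ : 0 < x)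
    (hx : x ≤ (1 - δ / 2) * slowBranch y₁) : y ^ 2 + a - 1 / x ^ 3 ≤ -(δ / 4 * y₁ ^ 2) := by
  have := slowBranch_pos hy₁
  have hκ : 0 < 1 - δ / 2 := by linarith
  have hinv : y₁ ^ 2 * (1 + δ / 2) ≤ 1 / x ^ 3 := calc
    y₁ ^ 2 * (1 + δ / 2) ≤ y₁ ^ 2 / (1 - δ / 2) ^ 3 := by
      have : (1 + δ / 2) * (1 - δ / 2) ^ 3 ≤ 1 := by
        have : (1 + δ / 2) * (1 - δ / 2) ≤ 1 := by nlinarith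
        have : (1 - δ / 2) ^ 2 ≤ 1 := by nlinarith
        nlinarith [sq_nonneg (1 - δ / 2)]
      rw [le_div_iff₀ (by positivity), mul_assoc]
      exact mul_le_of_le_one_right (sq_nonneg _) this
    _ = 1 / ((1 - δ / 2) * slowBranch y₁) ^ 3 := (one_div_mul_slowBranch_cube hy₁ _).symm
    _ ≤ 1 / x ^ 3 := by gcongr
  have hsq : y ^ 2 ≤ y₁ ^ 2 := by nlinarith [hy.1, hy.2]
  linarith [le_abs_self a]

theorem IsProfileOn.isEscaping_of_one_le {s t : ℝ} (h : IsProfileOn a u u₁ u₂ (Icc s t))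
    (hst : s ≤ t) (hu : 1 ≤ u s) (hu₁ : 0 < u₁ s) (hu₂ : (|a| + 1) * (t - s) < u₂ s)
    (ht : 1 < t ^ 2 + a) : IsEscaping a u u₁ u₂ t := by
  have hinv : ∀ y, 1 ≤ u y → 1 / u y ^ 3 ≤ 1 := fun y hy =>
    (div_le_one (by positivity)).2 (one_le_pow₀ hy)
  have hgrow := h.toJetOn.le_of_neg_le hu₁.le (by positivity) hu₂ fun y _ hy => by
    linarith [hinv y (hu.trans hy), sq_nonneg y, neg_abs_le a]
  obtain ⟨hut, hu₁t, hu₂t⟩ := hgrow t (right_mem_Icc.2 hst)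
  exact ⟨hu₁.trans_le hu₁t, hu₂t, (hinv t (hu.trans hut)).trans_lt ht⟩

theorem IsProfileOn.growth_of_slowBranch_lt
    (h : IsProfileOn a u u₁ u₂ (Icc y₁ ((1 - δ / 8) * y₁))) (hδ : 0 < δ) (hδ₁ : δ ≤ 1 / 2)
    (hy₁ : y₁ < 0) (ha : 8 * |a| ≤ δ * y₁ ^ 2) (hu : u y₁ = (1 + δ) * slowBranch y₁)
    (hu₁ : 0 < u₁ y₁) (hu₂ : 0 < u₂ y₁) :
    u₁ y₁ ≤ u₁ ((1 - δ / 8) * y₁) ∧ δ ^ 2 * (-y₁) ^ 3 / 64 ≤ u₂ ((1 - δ / 8) * y₁) ∧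
      δ ^ 4 * (-y₁) ^ 5 / 24576 ≤ u ((1 - δ / 8) * y₁) := by
  have hδy : 0 < δ * -y₁ := mul_pos hδ (neg_pos.2 hy₁)
  have hmem : (1 - δ / 8) * y₁ ∈ Icc y₁ ((1 - δ / 8) * y₁) := right_mem_Icc.2 (by linarith)
  have hforce : ∀ y ∈ Icc y₁ ((1 - δ / 8) * y₁), u y₁ ≤ u y →
      δ / 8 * y₁ ^ 2 ≤ y ^ 2 + a - 1 / u y ^ 3 := fun y hy hle =>
    le_force_of_slowBranch_le hδ hδ₁ hy₁ ha hy.2 (hu ▸ hle)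
  have hgrow := h.toJetOn.le_of_neg_le (c := 0) hu₁.le le_rfl (by simpa using hu₂)
    fun y hy hle => by
      rw [neg_zero]
      exact (by positivity : 0 ≤ δ / 8 * y₁ ^ 2).trans (hforce y hy hle)
  obtain ⟨htaylor₂, -, htaylor⟩ := h.toJetOn.taylor_le (fun y hy =>
    hforce y (Ico_subset_Icc_self hy) (hgrow y (Ico_subset_Icc_self hy)).1) _ hmem
  rw [show (1 - δ / 8) * y₁ - y₁ = δ * -y₁ / 8 by ring] at htaylor₂ htaylor
  refine ⟨(hgrow _ hmem).2.1, by linarith, ?_⟩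
  have := h.pos y₁ (left_mem_Icc.2 (by linarith))
  have : 0 ≤ u₁ y₁ * (δ * -y₁ / 8) := by positivity
  have : 0 ≤ u₂ y₁ / 2 * (δ * -y₁ / 8) ^ 2 := by positivity
  linarith

theorem IsProfileOn.isEscaping_of_slowBranch_lt (h : IsProfileOn a u u₁ u₂ (Icc y₁ (2 + |a|)))
    (hδ : 0 < δ) (hδ₁ : δ ≤ 1 / 2) (hy₁ : y₁ ≤ -1) (hlarge : 24576 * (|a| + 10) ≤ δ ^ 4 * -y₁)
    (hu : u y₁ = (1 + δ) * slowBranch y₁) (hu₁ : 0 < u₁ y₁) (hu₂ : 0 < u₂ y₁) :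
    IsEscaping a u u₁ u₂ (2 + |a|) := by
  have hy₁' : 1 ≤ -y₁ := by linarith
  have hpow : ∀ {i j : ℕ}, i ≤ 4 → 1 ≤ j → 24576 * (|a| + 10) ≤ δ ^ i * (-y₁) ^ j :=
    le_pow_mul_pow_of_le (by simpa using hlarge) hδ.le (by linarith) hy₁'
  have hδ₁₂ : 24576 * (|a| + 10) ≤ δ * y₁ ^ 2 := by
    simpa using hpow (i := 1) (j := 2) (by norm_num) (by norm_num)
  have hδ₀₁ : 24576 * (|a| + 10) ≤ -y₁ := by
    simpa using hpow (i := 0) (j := 1) (by norm_num) (by norm_num)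
  have hδ₂₂ : 24576 * (|a| + 10) ≤ δ ^ 2 * (-y₁) ^ 2 := hpow (by norm_num) (by norm_num)
  have hδ₄₅ : 24576 * (|a| + 10) ≤ δ ^ 4 * (-y₁) ^ 5 := hpow (by norm_num) (by norm_num)
  have ha := abs_nonneg a
  have hy₂ : y₁ ≤ (1 - δ / 8) * y₁ := by nlinarith
  have hy₂' : (1 - δ / 8) * y₁ ≤ 0 := mul_nonpos_of_nonneg_of_nonpos (by linarith) (by linarith)
  obtain ⟨hgrow₁, hgrow₂, hgrow⟩ :=
    (h.mono (Icc_subset_Icc_right (by linarith))).growth_of_slowBranch_lt hδ hδ₁ (by linarith)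
      (by linarith) hu hu₁ hu₂
  refine (h.mono (Icc_subset_Icc_left hy₂)).isEscaping_of_one_le (by linarith) (by linarith)
    (by linarith) (lt_of_lt_of_le ?_ hgrow₂) (by nlinarith [neg_abs_le a])
  calc (|a| + 1) * (2 + |a| - (1 - δ / 8) * y₁) ≤ (|a| + 1) * (2 * -y₁) := by
        gcongr
        linarith
    _ < 24576 * (|a| + 10) * -y₁ / 64 := by nlinarith
    _ ≤ δ ^ 2 * (-y₁) ^ 2 * -y₁ / 64 := by gcongr
    _ = δ ^ 2 * (-y₁) ^ 3 / 64 := by ring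

theorem IsProfileOn.le_of_lt_slowBranch (h : IsProfileOn a u u₁ u₂ (Icc y₁ y)) (hδ : 0 < δ)
    (hδ₁ : δ ≤ 1 / 2) (hy₁ : y₁ < 0) (ha : 4 * |a| ≤ δ * y₁ ^ 2)
    (hy : y ∈ Icc y₁ ((1 - δ / 4) * y₁)) (hu : u y₁ = (1 - δ) * slowBranch y₁)
    (hu₁ : u₁ y₁ ≤ slowBranch₁ y₁) (hu₂ : u₂ y₁ ≤ slowBranch₂ y₁)
    (hlt : ∀ z ∈ Ico y₁ y, u z < (1 - δ / 2) * slowBranch y₁) :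
    u y ≤ (1 - 3 / 4 * δ) * slowBranch y₁ - δ / 24 * y₁ ^ 2 * (y - y₁) ^ 3 := by
  have hy₁' : y₁ ≠ 0 := hy₁.ne
  have hs := slowBranch_pos hy₁
  have hy₀ : y ≤ 0 := hy.2.trans (mul_nonpos_of_nonneg_of_nonpos (by linarith) hy₁.le)
  have htaylor := (h.toJetOn.le_taylor (fun z hz => force_le_of_le_slowBranch hδ hδ₁ hy₁ ha
    ⟨hz.1, hz.2.le.trans hy₀⟩ (h.pos z (Ico_subset_Icc_self hz)) (hlt z hz).le) y
    (right_mem_Icc.2 hy.1)).2.2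
  have hg₀ : 0 ≤ y - y₁ := sub_nonneg.2 hy.1
  have hg : y - y₁ ≤ δ * -y₁ / 4 := by linarith [hy.2]
  have hfirst : u₁ y₁ * (y - y₁) ≤ slowBranch y₁ * δ / 6 := calc
    u₁ y₁ * (y - y₁) ≤ slowBranch₁ y₁ * (δ * -y₁ / 4) :=
      mul_le_mul hu₁ hg hg₀ (slowBranch₁_pos hy₁).le
    _ = slowBranch y₁ * δ / 6 := by
      unfold slowBranch₁
      field_simp
      ring
  have hsecond : u₂ y₁ / 2 * (y - y₁) ^ 2 ≤ slowBranch y₁ * δ / 20 := calc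
    u₂ y₁ / 2 * (y - y₁) ^ 2 ≤ slowBranch₂ y₁ / 2 * (δ * -y₁ / 4) ^ 2 := by
      have := (slowBranch₂_pos hy₁).le
      gcongr
    _ = slowBranch y₁ * δ * (δ * 5 / 144) := by
      unfold slowBranch₂
      field_simp
      ring
    _ ≤ slowBranch y₁ * δ * (1 / 20) := mul_le_mul_of_nonneg_left (by linarith) (by positivity)
    _ = slowBranch y₁ * δ / 20 := by ring
  rw [hu] at htaylor
  linarith [mul_pos hs hδ]

theorem not_isProfileOn_of_lt_slowBranch (hδ : 0 < δ) (hδ₁ : δ ≤ 1 / 2) (hy₁ : y₁ ≤ -1)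
    (hlarge : 24576 * (|a| + 10) ≤ δ ^ 4 * -y₁) (hu : u y₁ = (1 - δ) * slowBranch y₁)
    (hu₁ : u₁ y₁ ≤ slowBranch₁ y₁) (hu₂ : u₂ y₁ ≤ slowBranch₂ y₁) :
    ¬ IsProfileOn a u u₁ u₂ (Icc y₁ 0) := by
  intro h
  have hy₁' : 1 ≤ -y₁ := by linarith
  have hpow : ∀ {i j : ℕ}, i ≤ 4 → 1 ≤ j → 24576 * (|a| + 10) ≤ δ ^ i * (-y₁) ^ j :=
    le_pow_mul_pow_of_le (by simpa using hlarge) hδ.le (by linarith) hy₁'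
  have hδ₁₂ : 24576 * (|a| + 10) ≤ δ * y₁ ^ 2 := by
    simpa using hpow (i := 1) (j := 2) (by norm_num) (by norm_num)
  have hδ₄₅ : 24576 * (|a| + 10) ≤ δ ^ 4 * (-y₁) ^ 5 := hpow (by norm_num) (by norm_num)
  have ha := abs_nonneg a
  have hsδ : 0 < slowBranch y₁ * δ := mul_pos (slowBranch_pos (by linarith)) hδ
  have hs₁ := slowBranch_le_one hy₁
  have hy₂ : (1 - δ / 4) * y₁ ≤ 0 := mul_nonpos_of_nonneg_of_nonpos (by linarith) (by linarith)
  have hmem : (1 - δ / 4) * y₁ ∈ Icc y₁ ((1 - δ / 4) * y₁) := right_mem_Icc.2 (by nlinarith)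
  have hdrop : ∀ y ∈ Icc y₁ ((1 - δ / 4) * y₁),
      (∀ z ∈ Ico y₁ y, u z < (1 - δ / 2) * slowBranch y₁) →
      u y ≤ (1 - 3 / 4 * δ) * slowBranch y₁ - δ / 24 * y₁ ^ 2 * (y - y₁) ^ 3 := fun y hy =>
    (h.mono (Icc_subset_Icc_right (hy.2.trans hy₂))).le_of_lt_slowBranch hδ hδ₁ (by linarith)
      (by linarith) hy hu hu₁ hu₂
  have hbelow : ∀ y ∈ Icc y₁ ((1 - δ / 4) * y₁), -((1 - δ / 2) * slowBranch y₁) < -u y := by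
    refine forall_Icc_lt_of_forall_Ico (HasDerivAt.continuousOn fun y hy =>
      (h.hasDerivAt y ⟨hy.1, hy.2.trans hy₂⟩).neg) fun y hy hlt => ?_
    have hle := hdrop y hy fun z hz => neg_lt_neg_iff.1 (hlt z hz)
    have : 0 ≤ δ / 24 * y₁ ^ 2 * (y - y₁) ^ 3 := by
      have : 0 ≤ y - y₁ := sub_nonneg.2 hy.1
      positivity
    linarith
  have hend := hdrop _ hmem fun z hz => neg_lt_neg_iff.1 (hbelow z (Ico_subset_Icc_self hz))
  have hpos := h.pos _ ⟨hmem.1, hy₂⟩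
  rw [show δ / 24 * y₁ ^ 2 * ((1 - δ / 4) * y₁ - y₁) ^ 3 = δ ^ 4 * (-y₁) ^ 5 / 1536 by ring] at hend
  linarith

theorem IsProfileOn.abs_sub_slowBranch_ne {t : ℝ} (h : IsProfileOn a u u₁ u₂ (Icc y₀ t))
    (ht : 2 + |a| ≤ t) (hesc : ¬ IsEscaping a u u₁ u₂ (2 + |a|)) (hu : u y₀ = slowBranch y₀)
    (hu₁ : u₁ y₀ = slowBranch₁ y₀) (hδ : 0 < δ) (hδ₁ : δ ≤ 1 / 2) (hy₁ : y₁ ≤ -1)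
    (hlarge : 24576 * (|a| + 10) ≤ δ ^ 4 * -y₁) (hy₀ : y₀ < y₁)
    (hlt : ∀ z ∈ Ico y₀ y₁, |u z - slowBranch z| < δ * slowBranch z) :
    |u y₁ - slowBranch y₁| ≠ δ * slowBranch y₁ := by
  intro heq
  have ha := abs_nonneg a
  have hy₁' : y₁ < 0 := by linarith
  have hdev : ∀ z ∈ Icc y₀ y₁, |u z - slowBranch z| ≤ 1 / 2 * slowBranch z := fun z hz => by
    have := slowBranch_pos (hz.2.trans_lt hy₁')
    refine le_trans ?_ (by gcongr : δ * slowBranch z ≤ 1 / 2 * slowBranch z)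
    rcases hz.2.eq_or_lt with rfl | hz'
    · exact heq.le
    · exact (hlt z ⟨hz.1, hz'⟩).le
  have hδ₂₁ : 24576 * (|a| + 10) ≤ δ ^ 2 * (-y₁) ^ 1 :=
    le_pow_mul_pow_of_le (by simpa using hlarge) hδ.le (by linarith) (by linarith) (by norm_num)
      le_rfl
  have hprod := deviation_mul_pos_of_abs_sub_eq (h.mono (Icc_subset_Icc_right (by linarith))) hy₁
    hy₀.le hu hu₁ hdev hδ₁ heq (by linarith)
  have hs₁ := mul_pos hδ (slowBranch₁_pos hy₁')
  have hds := (hasDerivAt_slowBranch hy₁').const_mul δ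
  have hdv := (h.hasDerivAt y₁ ⟨hy₀.le, by linarith⟩).fun_sub (hasDerivAt_slowBranch hy₁')
  rcases abs_cases (u y₁ - slowBranch y₁) with ⟨habs, -⟩ | ⟨habs, -⟩
  · have hcross := nonpos_of_hasDerivAt_of_forall_Ico_le (hds.fun_sub hdv) hy₀ fun z hz => by
      linarith [hlt z hz, le_abs_self (u z - slowBranch z)]
    have hpos₁ : 0 < u₁ y₁ - slowBranch₁ y₁ := by linarith
    have hpos₂ := (pos_iff_pos_of_mul_pos hprod).1 hpos₁
    exact hesc ((h.mono (Icc_subset_Icc hy₀.le ht)).isEscaping_of_slowBranch_lt hδ hδ₁ hy₁ hlarge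
      (by linarith) (by linarith [slowBranch₁_pos hy₁']) (by linarith [slowBranch₂_pos hy₁']))
  · have hcross := nonpos_of_hasDerivAt_of_forall_Ico_le (hds.fun_add hdv) hy₀ fun z hz => by
      linarith [hlt z hz, neg_abs_le (u z - slowBranch z)]
    have hneg₁ : u₁ y₁ - slowBranch₁ y₁ < 0 := by linarith
    have hneg₂ := (neg_iff_neg_of_mul_pos hprod).1 hneg₁
    exact not_isProfileOn_of_lt_slowBranch hδ hδ₁ hy₁ hlarge (by linarith) (by linarith)
      (by linarith) (h.mono (Icc_subset_Icc hy₀.le (by linarith)))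

theorem IsProfileOn.abs_sub_slowBranch_lt {t : ℝ} (h : IsProfileOn a u u₁ u₂ (Icc y₀ t))
    (ht : 2 + |a| ≤ t) (hesc : ¬ IsEscaping a u u₁ u₂ (2 + |a|)) (hu : u y₀ = slowBranch y₀)
    (hu₁ : u₁ y₀ = slowBranch₁ y₀) (hδ : 0 < δ) (hδ₁ : δ ≤ 1 / 2) (hy₁ : y₁ ≤ -1)
    (hlarge : 24576 * (|a| + 10) ≤ δ ^ 4 * -y₁) :
    ∀ y ∈ Icc y₀ y₁, |u y - slowBranch y| < δ * slowBranch y := by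
  have ha := abs_nonneg a
  have hcont : ContinuousOn (fun y => δ * slowBranch y - |u y - slowBranch y|) (Icc y₀ y₁) := by
    have hs : ContinuousOn slowBranch (Icc y₀ y₁) := HasDerivAt.continuousOn fun y hy =>
      hasDerivAt_slowBranch (by linarith [hy.2])
    have hu : ContinuousOn u (Icc y₀ y₁) := HasDerivAt.continuousOn fun y hy =>
      h.hasDerivAt y ⟨hy.1, by linarith [hy.2]⟩
    fun_prop
  suffices ∀ y ∈ Icc y₀ y₁, 0 < δ * slowBranch y - |u y - slowBranch y| from
    fun y hy => sub_pos.1 (this y hy)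
  intro y hy
  have hinit : 0 < δ * slowBranch y₀ - |u y₀ - slowBranch y₀| := by
    rw [hu, sub_self, abs_zero, sub_zero]
    exact mul_pos hδ (slowBranch_pos (by linarith [hy.1, hy.2]))
  refine forall_Icc_lt_of_forall_Ico_ne hcont hinit (fun y hy hlt heq => ?_) y hy
  have hδy : δ ^ 4 * -y₁ ≤ δ ^ 4 * -y := by
    gcongr
    exact hy.2
  exact h.abs_sub_slowBranch_ne ht hesc hu hu₁ hδ hδ₁ (hy.2.trans hy₁) (hlarge.trans hδy) hy.1
    (fun z hz => sub_pos.1 (hlt z hz)) (sub_eq_zero.1 heq).symm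

end Trapping

section Family

/-- The solutions on `[-n, n - 2]` produced by shooting; the solution on the whole line is a limit
of these as `n → ∞`. The constant in `abs_sub_lt` is the one that the trapping argument needs. -/
structure IsTrappedProfile (a n : ℝ) (u u₁ u₂ : ℝ → ℝ) : Prop
    extends IsProfileOn a u u₁ u₂ (Icc (-n) (n - 2)) where
  not_isEscaping : ∀ y ∈ Icc 0 (n - 2), ¬ IsEscaping a u u₁ u₂ y
  abs_sub_lt : ∀ {δ y : ℝ}, 0 < δ → δ ≤ 1 / 2 → y ∈ Icc (-n) (-1) →
    24576 * (|a| + 10) ≤ δ ^ 4 * -y → |u y - slowBranch y| < δ * slowBranch y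

/-- `IsProfileOn` together with the bounds that make a family of profiles locally compact. -/
structure IsBoundedProfileOn (a m M : ℝ) (u u₁ u₂ : ℝ → ℝ) (s : Set ℝ) : Prop
    extends IsProfileOn a u u₁ u₂ s where
  le : ∀ y ∈ s, m ≤ u y
  abs_le : ∀ y ∈ s, |u y| ≤ M
  abs_le₁ : ∀ y ∈ s, |u₁ y| ≤ M
  abs_le₂ : ∀ y ∈ s, |u₂ y| ≤ M
  abs_le₃ : ∀ y ∈ s, |y ^ 2 + a - 1 / u y ^ 3| ≤ M

variable {a n m M N y : ℝ} {u u₁ u₂ : ℝ → ℝ}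

theorem exists_isTrappedProfile (hn : 4 + |a| ≤ n) : ∃ u u₁ u₂, IsTrappedProfile a n u u₁ u₂ := by
  have ha := abs_nonneg a
  have hn₀ : -n < 0 := by linarith
  obtain ⟨u, u₁, u₂, h, hu, hu₁, hesc⟩ := exists_isProfileOn_not_isEscaping a
    (by linarith : 1 ≤ n) (slowBranch_pos hn₀) (slowBranch₁_pos hn₀)
  refine ⟨u, u₁, u₂, h, hesc, fun hδ hδ₁ hy hlarge => ?_⟩
  exact h.abs_sub_slowBranch_lt (by linarith) (hesc _ ⟨by positivity, by linarith⟩) hu hu₁ hδ hδ₁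
    hy.2 hlarge _ (right_mem_Icc.2 hy.1)

theorem IsBoundedProfileOn.mono {S T : Set ℝ} (h : IsBoundedProfileOn a m M u u₁ u₂ T)
    (hST : S ⊆ T) : IsBoundedProfileOn a m M u u₁ u₂ S :=
  ⟨h.toIsProfileOn.mono hST, fun y hy => h.le y (hST hy), fun y hy => h.abs_le y (hST hy),
    fun y hy => h.abs_le₁ y (hST hy), fun y hy => h.abs_le₂ y (hST hy),
    fun y hy => h.abs_le₃ y (hST hy)⟩

theorem abs_force_le {x K : ℝ} (hx : 0 < x) (hK : 1 / x ^ 3 ≤ K) :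
    |y ^ 2 + a - 1 / x ^ 3| ≤ y ^ 2 + |a| + K := by
  have hinv : 0 < 1 / x ^ 3 := by positivity
  rw [abs_le]
  constructor <;> linarith [sq_nonneg y, neg_abs_le a, le_abs_self a]

theorem exists_pos_forall_le_profile (a : ℝ) {M N : ℝ} (hM : 1 ≤ M) (hN : 0 ≤ N) :
    ∃ m > 0, ∀ {u u₁ u₂ : ℝ → ℝ}, IsProfileOn a u u₁ u₂ (Icc (-N) (N + 2)) → u₁ (-N) ≤ M →
      u₂ (-N) ≤ M → ∀ y ∈ Icc (-N) N, m ≤ u y := by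
  obtain ⟨m, hm, hlow⟩ := JetOn.exists_pos_forall_le_max (C := (N + 2) ^ 2 + |a|) (M := M)
    (S := 2 * N + 2) (by positivity) hM (by linarith)
  refine ⟨m, hm, fun {u u₁ u₂} h hu₁ hu₂ y hy => ?_⟩
  have hmax : ∀ z ∈ Icc (-N) (N + 2), max (u z) 0 = u z := fun z hz =>
    max_eq_left (h.pos z hz).le
  have hle := hlow (ε := 0) h.toJetOn (by linarith) hu₁ hu₂ (fun z hz => (h.pos z hz).le)
    (fun z hz => (h.pos z hz).trans_le (le_max_left _ _)) (fun z hz => ?_) y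
    ⟨hy.1, by linarith [hy.2]⟩
  · rwa [hmax y ⟨hy.1, by linarith [hy.2]⟩] at hle
  · have : z ^ 2 ≤ (N + 2) ^ 2 := sq_le_sq' (by linarith [hz.1]) hz.2
    rw [hmax z hz]
    linarith [le_abs_self a]

namespace IsTrappedProfile

theorem abs_le_of_le (h : IsTrappedProfile a n u u₁ u₂) (hy : -n ≤ y)
    (hy' : y ≤ -(393216 * (|a| + 10))) :
    |u y| ≤ 2 ∧ |y ^ 2 + a - 1 / u y ^ 3| ≤ 9 * y ^ 2 + |a| := by
  have ha := abs_nonneg a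
  have hy₁ : y ≤ -1 := by linarith
  have hs := slowBranch_pos (by linarith : y < 0)
  have hdev := abs_lt.1 (h.abs_sub_lt (δ := 1 / 2) (by norm_num) le_rfl ⟨hy, hy₁⟩ (by linarith))
  have hpos : 0 < u y := by linarith
  refine ⟨by rw [abs_of_pos hpos]; linarith [slowBranch_le_one hy₁], ?_⟩
  have hinv : 1 / u y ^ 3 ≤ 8 * y ^ 2 := calc
    1 / u y ^ 3 ≤ 1 / (1 / 2 * slowBranch y) ^ 3 := by
      gcongr
      linarith
    _ = 8 * y ^ 2 := by
      rw [one_div_mul_slowBranch_cube (by linarith)]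
      ring
  linarith [abs_force_le (a := a) (y := y) hpos hinv]

theorem abs_initial_le (h : IsTrappedProfile a n u u₁ u₂) (hN : 400000 * (|a| + 10) ≤ N)
    (hn : N + 4 ≤ n) : |u (-N)| ≤ 26 + 18 * N ^ 2 + 2 * |a| ∧
      |u₁ (-N)| ≤ 26 + 18 * N ^ 2 + 2 * |a| ∧ |u₂ (-N)| ≤ 26 + 18 * N ^ 2 + 2 * |a| := by
  have ha := abs_nonneg a
  have hbound : ∀ y ∈ Icc (-N) (-N + 2 * 1),
      |u y - 0| ≤ 2 ∧ |y ^ 2 + a - 1 / u y ^ 3| ≤ 9 * N ^ 2 + |a| := fun y hy => by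
    obtain ⟨hu, hforce⟩ := h.abs_le_of_le (by linarith [hy.1] : -n ≤ y) (by linarith [hy.2])
    have : y ^ 2 ≤ N ^ 2 := sq_le_sq' hy.1 (by linarith [hy.2])
    exact ⟨by rwa [sub_zero], by linarith⟩
  have hsub : Icc (-N) (-N + 2 * 1) ⊆ Icc (-n) (n - 2) :=
    Icc_subset_Icc (by linarith) (by linarith)
  obtain ⟨hu₁, hu₂⟩ := (h.toJetOn.mono hsub).mul_abs_le_of_abs_sub_le zero_le_one
    (fun y hy => (hbound y hy).1) fun y hy => (hbound y hy).2
  have hu := (hbound (-N) ⟨le_rfl, by linarith⟩).1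
  rw [sub_zero] at hu
  have hNsq := sq_nonneg N
  exact ⟨by linarith, by linarith, by linarith⟩

theorem exists_isBoundedProfileOn (hN : 400000 * (|a| + 10) ≤ N) :
    ∃ m > 0, ∃ M, ∀ {n : ℝ} {u u₁ u₂ : ℝ → ℝ}, N + 4 ≤ n → IsTrappedProfile a n u u₁ u₂ →
      IsBoundedProfileOn a m M u u₁ u₂ (Icc (-N) N) := by
  have ha := abs_nonneg a
  set M₀ := 26 + 18 * N ^ 2 + 2 * |a|
  have hM₀ : 1 ≤ M₀ := by
    simp only [M₀]
    linarith [sq_nonneg N]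
  obtain ⟨m, hm, hlow⟩ := exists_pos_forall_le_profile a hM₀ (by linarith : 0 ≤ N)
  set B := N ^ 2 + |a| + 1 / m ^ 3
  refine ⟨m, hm, (M₀ + B) * (1 + (N - -N)) ^ 3, fun {n u u₁ u₂} hn h => ?_⟩
  obtain ⟨hu, hu₁, hu₂⟩ := h.abs_initial_le hN hn
  have hlong := h.toIsProfileOn.mono
    (Icc_subset_Icc (by linarith) (by linarith) : Icc (-N) (N + 2) ⊆ Icc (-n) (n - 2))
  have hle := hlow hlong ((le_abs_self _).trans hu₁) ((le_abs_self _).trans hu₂)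
  have hshort := hlong.mono (Icc_subset_Icc_right (by linarith) : Icc (-N) N ⊆ _)
  have hforce : ∀ y ∈ Icc (-N) N, |y ^ 2 + a - 1 / u y ^ 3| ≤ B := fun y hy => by
    have hinv : 1 / u y ^ 3 ≤ 1 / m ^ 3 := by
      gcongr
      exact hle y hy
    have : y ^ 2 ≤ N ^ 2 := sq_le_sq' hy.1 hy.2
    have := abs_force_le (a := a) (y := y) (hshort.pos y hy) hinv
    simp only [B]
    linarith
  have hall := hshort.toJetOn.abs_le_of_abs_third_le hu hu₁ hu₂ hforce
  have hB : B ≤ (M₀ + B) * (1 + (N - -N)) ^ 3 := by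
    have hB₀ : 0 ≤ B := by positivity
    exact (by linarith : B ≤ M₀ + B).trans
      (le_mul_of_one_le_right (by linarith) (one_le_pow₀ (by linarith)))
  exact ⟨hshort, hle, fun y hy => (hall y hy).1, fun y hy => (hall y hy).2.1,
    fun y hy => (hall y hy).2.2, fun y hy => (hforce y hy).trans hB⟩

end IsTrappedProfile

end Family

/-! ### Passage to the limit -/

section PointwiseLimit

variable {ι : Type*} {l : Filter ι} [l.NeBot] {f f' f'' : ι → ℝ → ℝ} {g : ℝ → ℝ} {y d B : ℝ}

theorem abs_sub_sub_mul_le_of_abs_second_le {f f' f'' : ℝ → ℝ} {y z B : ℝ}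
    (hf : ∀ x ∈ uIcc y z, HasDerivAt f (f' x) x) (hf' : ∀ x ∈ uIcc y z, HasDerivAt f' (f'' x) x)
    (hB : ∀ x ∈ uIcc y z, |f'' x| ≤ B) : |f z - f y - (z - y) * f' y| ≤ B * (z - y) ^ 2 := by
  have hB₀ : 0 ≤ B := (abs_nonneg _).trans (hB y left_mem_uIcc)
  have hslope : ∀ x ∈ uIcc y z, |f' x - f' y| ≤ B * |z - y| := fun x hx => calc
    |f' x - f' y| ≤ B * |x - y| := (convex_uIcc y z).norm_image_sub_le_of_norm_hasDerivWithin_le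
      (fun w hw => (hf' w hw).hasDerivWithinAt) hB left_mem_uIcc hx
    _ ≤ B * |z - y| := by
      gcongr ?_ * ?_
      exact abs_sub_left_of_mem_uIcc hx
  have hlin : ∀ x ∈ uIcc y z,
      HasDerivWithinAt (fun x => f x - x * f' y) (f' x - f' y) (uIcc y z) x := fun x hx =>
    (((hf x hx).fun_sub ((hasDerivAt_id' x).mul_const (f' y))).congr_deriv
      (by rw [one_mul])).hasDerivWithinAt
  calc |f z - f y - (z - y) * f' y| = ‖f z - z * f' y - (f y - y * f' y)‖ := by
        rw [Real.norm_eq_abs]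
        congr 1
        ring
    _ ≤ B * |z - y| * ‖z - y‖ := (convex_uIcc y z).norm_image_sub_le_of_norm_hasDerivWithin_le
        hlin hslope left_mem_uIcc right_mem_uIcc
    _ = B * (z - y) ^ 2 := by rw [Real.norm_eq_abs, mul_assoc, abs_mul_abs_self, sq]

theorem hasDerivAt_of_eventually_abs_sub_le
    (h : ∀ᶠ z in 𝓝 y, |g z - g y - (z - y) * d| ≤ B * (z - y) ^ 2) : HasDerivAt g d y := by
  refine hasDerivAt_iff_isLittleO.2 (Asymptotics.IsBigO.trans_isLittleO
    (g := fun z => ‖z - y‖ ^ 2) (Asymptotics.IsBigO.of_bound B ?_)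
    (Asymptotics.isLittleO_pow_sub_sub y one_lt_two))
  filter_upwards [h] with z hz
  rwa [smul_eq_mul, Real.norm_eq_abs, Real.norm_eq_abs, Real.norm_eq_abs, sq_abs, abs_sq]

theorem hasDerivAt_of_tendsto_of_abs_second_le (hg : ∀ z, Tendsto (f · z) l (𝓝 (g z)))
    (hd : Tendsto (f' · y) l (𝓝 d))
    (h : ∀ᶠ i in l, ∀ z ∈ Icc (y - 1) (y + 1),
      HasDerivAt (f i) (f' i z) z ∧ HasDerivAt (f' i) (f'' i z) z ∧ |f'' i z| ≤ B) :
    HasDerivAt g d y := by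
  refine hasDerivAt_of_eventually_abs_sub_le (B := B) ?_
  filter_upwards [Icc_mem_nhds (sub_one_lt y) (lt_add_one y)] with z hz
  refine le_of_tendsto (((hg z).sub (hg y)).sub (hd.const_mul (z - y))).abs ?_
  have hsub : uIcc y z ⊆ Icc (y - 1) (y + 1) :=
    uIcc_subset_Icc ⟨by linarith, by linarith⟩ hz
  filter_upwards [h] with i hi
  exact abs_sub_sub_mul_le_of_abs_second_le (fun x hx => (hi x (hsub hx)).1)
    (fun x hx => (hi x (hsub hx)).2.1) fun x hx => (hi x (hsub hx)).2.2

theorem exists_tendsto_ultrafilter_of_eventually_abs_le (F : Ultrafilter ι) {x : ι → ℝ}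
    (h : ∀ᶠ i in F, |x i| ≤ B) : ∃ c, Tendsto x F (𝓝 c) := by
  obtain ⟨c, -, hc⟩ := (isCompact_Icc (a := -B) (b := B)).ultrafilter_le_nhds (F.map x)
    (le_principal_iff.2 (h.mono fun i hi => abs_le.1 hi))
  exact ⟨c, hc⟩

end PointwiseLimit

section LimitProfile

variable {ι : Type*} {l : Filter ι} {a y m M : ℝ} {s : Set ℝ} {u u₁ u₂ : ℝ → ℝ}
  {U U₁ U₂ : ι → ℝ → ℝ}

theorem IsProfileOn.hasDerivAt_force (h : IsProfileOn a u u₁ u₂ s) (hy : y ∈ s) :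
    HasDerivAt (fun y => y ^ 2 + a - 1 / u y ^ 3) (2 * y + 3 * (u₁ y / u y ^ 4)) y := by
  have hpos : u y ≠ 0 := (h.pos y hy).ne'
  refine (((hasDerivAt_pow 2 y).add_const a).fun_sub ((hasDerivAt_const y 1).fun_div
    ((h.hasDerivAt y hy).fun_pow 3) (pow_ne_zero 3 hpos))).congr_deriv ?_
  field_simp
  ring

theorem IsBoundedProfileOn.abs_deriv_force_le (h : IsBoundedProfileOn a m M u u₁ u₂ s)
    (hm : 0 < m) (hy : y ∈ s) : |2 * y + 3 * (u₁ y / u y ^ 4)| ≤ 2 * |y| + 3 * (M / m ^ 4) := by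
  have := h.le y hy
  have := h.abs_le₁ y hy
  have : 0 ≤ M := (abs_nonneg _).trans this
  calc |2 * y + 3 * (u₁ y / u y ^ 4)| ≤ |2 * y| + |3 * (u₁ y / u y ^ 4)| := abs_add_le _ _
    _ = 2 * |y| + 3 * (|u₁ y| / u y ^ 4) := by
      rw [abs_mul, abs_mul, abs_div, abs_two, abs_of_pos (pow_pos (h.pos y hy) 4),
        abs_of_pos (three_pos : (0 : ℝ) < 3)]
    _ ≤ 2 * |y| + 3 * (M / m ^ 4) := by gcongr

theorem exists_eventually_isBoundedProfileOn {n : ι → ℝ} (hn : Tendsto n l atTop)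
    (h : ∀ i, IsTrappedProfile a (n i) (U i) (U₁ i) (U₂ i)) (y : ℝ) :
    ∃ m > 0, ∃ M,
      ∀ᶠ i in l, IsBoundedProfileOn a m M (U i) (U₁ i) (U₂ i) (Icc (y - 1) (y + 1)) := by
  obtain ⟨m, hm, M, hbdd⟩ := IsTrappedProfile.exists_isBoundedProfileOn (a := a)
    (N := 400000 * (|a| + 10) + |y| + 1) (by linarith [abs_nonneg y])
  refine ⟨m, hm, M, ?_⟩
  filter_upwards [hn.eventually_ge_atTop (400000 * (|a| + 10) + |y| + 1 + 4)] with i hi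
  exact (hbdd hi (h i)).mono (Icc_subset_Icc (by linarith [abs_nonneg a, neg_abs_le y])
    (by linarith [abs_nonneg a, le_abs_self y]))

theorem tendsto_force {x : ι → ℝ} {c : ℝ} (hx : Tendsto x l (𝓝 c)) (hc : 0 < c) :
    Tendsto (fun i => y ^ 2 + a - 1 / x i ^ 3) l (𝓝 (y ^ 2 + a - 1 / c ^ 3)) :=
  tendsto_const_nhds.sub (tendsto_const_nhds.div (hx.pow 3) (pow_pos hc 3).ne')

variable [l.NeBot]

theorem isProfileOn_univ_of_tendsto
    (h : ∀ y, ∃ m > 0, ∃ M,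
      ∀ᶠ i in l, IsBoundedProfileOn a m M (U i) (U₁ i) (U₂ i) (Icc (y - 1) (y + 1)))
    (hu : ∀ y, Tendsto (U · y) l (𝓝 (u y))) (hu₁ : ∀ y, Tendsto (U₁ · y) l (𝓝 (u₁ y)))
    (hu₂ : ∀ y, Tendsto (U₂ · y) l (𝓝 (u₂ y))) : IsProfileOn a u u₁ u₂ univ := by
  have hself : ∀ y : ℝ, y ∈ Icc (y - 1) (y + 1) := fun y => ⟨by linarith, by linarith⟩
  have hpos : ∀ y, 0 < u y := fun y => by
    obtain ⟨m, hm, M, h⟩ := h y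
    exact hm.trans_le (ge_of_tendsto (hu y) (h.mono fun i hi => hi.le y (hself y)))
  refine ⟨⟨fun y _ => ?_, fun y _ => ?_, fun y _ => ?_⟩, fun y _ => hpos y⟩ <;>
    obtain ⟨m, hm, M, h⟩ := h y
  · exact hasDerivAt_of_tendsto_of_abs_second_le hu (hu₁ y) (h.mono fun i hi z hz =>
      ⟨hi.hasDerivAt z hz, hi.hasDerivAt₁ z hz, hi.abs_le₂ z hz⟩)
  · exact hasDerivAt_of_tendsto_of_abs_second_le hu₁ (hu₂ y) (h.mono fun i hi z hz =>
      ⟨hi.hasDerivAt₁ z hz, hi.hasDerivAt₂ z hz, hi.abs_le₃ z hz⟩)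
  · refine hasDerivAt_of_tendsto_of_abs_second_le
      (f' := fun i z => z ^ 2 + a - 1 / U i z ^ 3) (B := 2 * (|y| + 1) + 3 * (M / m ^ 4)) hu₂
      (tendsto_force (hu y) (hpos y)) (h.mono fun i hi z hz =>
        ⟨hi.hasDerivAt₂ z hz, hi.hasDerivAt_force hz, ?_⟩)
    have hz' : |z| ≤ |y| + 1 := abs_le.2
      ⟨by linarith [hz.1, neg_abs_le y], by linarith [hz.2, le_abs_self y]⟩
    linarith [hi.abs_deriv_force_le hm hz]

theorem not_isEscaping_of_tendsto (hu : Tendsto (U · y) l (𝓝 (u y)))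
    (hu₁ : Tendsto (U₁ · y) l (𝓝 (u₁ y))) (hu₂ : Tendsto (U₂ · y) l (𝓝 (u₂ y)))
    (hpos : 0 < u y) (h : ∀ᶠ i in l, ¬ IsEscaping a (U i) (U₁ i) (U₂ i) y) :
    ¬ IsEscaping a u u₁ u₂ y := fun ⟨h₁, h₂, h₃⟩ => by
  have hforce := (tendsto_force (y := y) (a := a) hu hpos).eventually_const_lt (sub_pos.2 h₃)
  obtain ⟨i, ⟨⟨hi₁, hi₂⟩, hi₃⟩, hi⟩ := (((hu₁.eventually_const_lt h₁).and
    (hu₂.eventually_const_lt h₂)).and hforce).and h |>.exists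
  exact hi ⟨hi₁, hi₂, sub_pos.1 hi₃⟩

theorem isEquivalent_slowBranch_of_tendsto {n : ι → ℝ} (hn : Tendsto n l atTop)
    (h : ∀ i, IsTrappedProfile a (n i) (U i) (U₁ i) (U₂ i))
    (hu : ∀ y, Tendsto (U · y) l (𝓝 (u y))) : u ~[atBot] slowBranch := by
  refine Asymptotics.isLittleO_iff.2 fun ε hε => ?_
  set δ := min ε (1 / 2)
  have hδ : 0 < δ := lt_min hε one_half_pos
  filter_upwards [eventually_le_atBot (-1),
    eventually_le_atBot (-(24576 * (|a| + 10) / δ ^ 4))] with y hy hy'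
  have hs := slowBranch_pos (by linarith : y < 0)
  have hlarge : 24576 * (|a| + 10) ≤ δ ^ 4 * -y := by
    rw [← div_le_iff₀' (by positivity)]
    linarith
  have hle : |u y - slowBranch y| ≤ δ * slowBranch y := by
    refine le_of_tendsto ((hu y).sub_const (slowBranch y)).abs ?_
    filter_upwards [hn.eventually_ge_atTop (-y)] with i hi
    exact ((h i).abs_sub_lt hδ (min_le_right _ _) ⟨by linarith, hy⟩ hlarge).le
  calc ‖u y - slowBranch y‖ ≤ δ * slowBranch y := hle
    _ ≤ ε * ‖slowBranch y‖ := by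
      rw [Real.norm_eq_abs, abs_of_pos hs]
      gcongr
      exact min_le_left _ _

theorem exists_tendsto_of_eventually_isBoundedProfileOn (F : Ultrafilter ι)
    (h : ∀ᶠ i in F, IsBoundedProfileOn a m M (U i) (U₁ i) (U₂ i) s) (hy : y ∈ s) :
    ∃ x x₁ x₂, Tendsto (U · y) F (𝓝 x) ∧ Tendsto (U₁ · y) F (𝓝 x₁) ∧
      Tendsto (U₂ · y) F (𝓝 x₂) := by
  obtain ⟨x, hx⟩ := exists_tendsto_ultrafilter_of_eventually_abs_le F
    (h.mono fun _ hi => hi.abs_le y hy)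
  obtain ⟨x₁, hx₁⟩ := exists_tendsto_ultrafilter_of_eventually_abs_le F
    (h.mono fun _ hi => hi.abs_le₁ y hy)
  obtain ⟨x₂, hx₂⟩ := exists_tendsto_ultrafilter_of_eventually_abs_le F
    (h.mono fun _ hi => hi.abs_le₂ y hy)
  exact ⟨x, x₁, x₂, hx, hx₁, hx₂⟩

theorem exists_profile (a : ℝ) : ∃ u u₁ u₂ : ℝ → ℝ, IsProfileOn a u u₁ u₂ univ ∧
    (∀ y, 0 ≤ y → ¬ IsEscaping a u u₁ u₂ y) ∧ u ~[atBot] slowBranch := by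
  set n : ℕ → ℝ := fun k => k + (4 + |a|)
  choose U U₁ U₂ hU using fun k => exists_isTrappedProfile (a := a) (n := n k)
    (le_add_of_nonneg_left k.cast_nonneg)
  set F : Ultrafilter ℕ := hyperfilter ℕ
  have hn : Tendsto n F atTop := (tendsto_atTop_add_const_right _ _
    tendsto_natCast_atTop_atTop).mono_left Nat.hyperfilter_le_atTop
  have hbdd := exists_eventually_isBoundedProfileOn hn hU
  have hlim : ∀ y, ∃ x x₁ x₂, Tendsto (U · y) F (𝓝 x) ∧ Tendsto (U₁ · y) F (𝓝 x₁) ∧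
      Tendsto (U₂ · y) F (𝓝 x₂) := fun y => by
    obtain ⟨_, -, _, h⟩ := hbdd y
    exact exists_tendsto_of_eventually_isBoundedProfileOn F h ⟨by linarith, by linarith⟩
  choose u u₁ u₂ hu hu₁ hu₂ using hlim
  have hprofile := isProfileOn_univ_of_tendsto hbdd hu hu₁ hu₂
  refine ⟨u, u₁, u₂, hprofile, fun y hy => ?_, isEquivalent_slowBranch_of_tendsto hn hU hu⟩
  refine not_isEscaping_of_tendsto (hu y) (hu₁ y) (hu₂ y) (hprofile.pos y (mem_univ y)) ?_
  filter_upwards [hn.eventually_ge_atTop (y + 2)] with k hk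
  exact (hU k).not_isEscaping y ⟨hy, by linarith⟩

end LimitProfile

/-! ### Behaviour at the slow end -/

section CosRoot

/-- The ninth root of `cos (arctan x)`. All fractional powers of `cos θ` in system (D) are integer
powers of it. -/
noncomputable def cosRoot (x : ℝ) : ℝ :=
  (1 + x ^ 2) ^ (-(1 / 18) : ℝ)

variable (x : ℝ)

theorem cosRoot_pos : 0 < cosRoot x :=
  Real.rpow_pos_of_pos (by positivity) _

theorem cosRoot_le_one : cosRoot x ≤ 1 :=
  Real.rpow_le_one_of_one_le_of_nonpos (by linarith [sq_nonneg x]) (by norm_num)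

theorem cosRoot_neg : cosRoot (-x) = cosRoot x := by
  rw [cosRoot, cosRoot, neg_sq]

theorem cosRoot_pow (k : ℕ) : cosRoot x ^ k = (1 + x ^ 2) ^ (-(k / 18) : ℝ) := by
  rw [cosRoot, ← Real.rpow_mul_natCast (by positivity)]
  congr 1
  ring

theorem cosRoot_pow_mul_one_add_sq : cosRoot x ^ 18 * (1 + x ^ 2) = 1 := by
  have : (0 : ℝ) < 1 + x ^ 2 := by positivity
  rw [cosRoot_pow, Nat.cast_ofNat, div_self (by norm_num), Real.rpow_neg_one,
    inv_mul_cancel₀ this.ne']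

theorem cos_arctan_eq_cosRoot_pow : Real.cos (Real.arctan x) = cosRoot x ^ 9 := by
  rw [Real.cos_arctan, cosRoot_pow, Real.sqrt_eq_rpow, one_div, ← Real.rpow_neg (by positivity)]
  norm_num

theorem cos_arctan_rpow {r : ℝ} (k : ℕ) (hr : 9 * r = k) :
    Real.cos (Real.arctan x) ^ r = cosRoot x ^ k := by
  rw [cos_arctan_eq_cosRoot_pow, ← Real.rpow_natCast_mul (cosRoot_pos x).le, Nat.cast_ofNat, hr,
    Real.rpow_natCast]

theorem sin_arctan_eq_mul_cosRoot_pow : Real.sin (Real.arctan x) = x * cosRoot x ^ 9 := by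
  rw [← cos_arctan_eq_cosRoot_pow, Real.sin_arctan, Real.cos_arctan, mul_one_div]

theorem sin_arctan_sq_add_cosRoot_pow : Real.sin (Real.arctan x) ^ 2 + cosRoot x ^ 18 = 1 := by
  rw [← Real.sin_sq_add_cos_sq (Real.arctan x), cos_arctan_eq_cosRoot_pow, ← pow_mul]

theorem sq_mul_cosRoot_pow : x ^ 2 * cosRoot x ^ 18 = Real.sin (Real.arctan x) ^ 2 := by
  rw [sin_arctan_eq_mul_cosRoot_pow]
  ring

theorem hasDerivAt_cosRoot :
    HasDerivAt cosRoot (-(1 / 9) * Real.sin (Real.arctan x) * cosRoot x ^ 10) x := by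
  have hpos : 0 < 1 + x ^ 2 := by positivity
  refine (((hasDerivAt_pow 2 x).const_add 1).rpow_const (p := (-(1 / 18) : ℝ))
    (Or.inl hpos.ne')).congr_deriv ?_
  rw [Real.rpow_sub_one hpos.ne', sin_arctan_eq_mul_cosRoot_pow]
  change _ * _ * (cosRoot x / _) = _
  field_simp
  linear_combination 18 * x * cosRoot x * cosRoot_pow_mul_one_add_sq x

theorem hasDerivAt_sin_arctan :
    HasDerivAt (fun x => Real.sin (Real.arctan x)) (cosRoot x ^ 27) x := by
  refine (Real.hasDerivAt_arctan x).sin.congr_deriv ?_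
  rw [cos_arctan_eq_cosRoot_pow]
  have : (0 : ℝ) < 1 + x ^ 2 := by positivity
  field_simp
  linear_combination -cosRoot x ^ 9 * cosRoot_pow_mul_one_add_sq x

theorem tendsto_cosRoot_atTop : Tendsto cosRoot atTop (𝓝 0) :=
  (tendsto_rpow_neg_atTop (by norm_num : (0 : ℝ) < 1 / 18)).comp
    (tendsto_atTop_add_const_left _ _ (tendsto_pow_atTop two_ne_zero))

theorem tendsto_norm_sq_atBot : Tendsto (fun y : ℝ => ‖y ^ 2‖) atBot atTop := by
  simp_rw [norm_pow, Real.norm_eq_abs]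
  exact (tendsto_pow_atTop two_ne_zero).comp tendsto_abs_atBot_atTop

theorem cosRoot_pow_isEquivalent_slowBranch :
    (fun y => cosRoot y ^ 6) ~[atBot] slowBranch := by
  have hsq : (fun y : ℝ => 1 + y ^ 2) ~[atBot] fun y => y ^ 2 :=
    Asymptotics.IsEquivalent.refl.const_add_of_norm_tendsto_atTop tendsto_norm_sq_atBot
  refine ((hsq.rpow (r := -(1 / 3)) fun y => sq_nonneg y).congr_left
    (Eventually.of_forall fun y => ?_)).congr_right ?_
  · simp only [Pi.pow_apply, cosRoot_pow]
    norm_num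
  · filter_upwards [eventually_lt_atBot 0] with y hy
    simp only [Pi.pow_apply, slowBranch]
    rw [← neg_sq, ← Real.rpow_natCast_mul (by linarith)]
    norm_num

end CosRoot

section Asymptotics

variable {a y δ : ℝ} {u u₁ u₂ : ℝ → ℝ}

theorem mul_slowBranch_le_mul_slowBranch {z : ℝ} (hyz : y ≤ z) (hz : z < 0) :
    -z * slowBranch z ≤ -y * slowBranch y := by
  have hy : y < 0 := hyz.trans_lt hz
  have hpow : ∀ {w : ℝ}, w < 0 → (-w * slowBranch w) ^ 3 = -w := fun {w} hw => by
    linear_combination -w * slowBranch_cube_mul_sq hw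
  have : 0 ≤ -y * slowBranch y := (mul_pos (neg_pos.2 hy) (slowBranch_pos hy)).le
  refine le_of_pow_le_pow_left₀ three_ne_zero this ?_
  rw [hpow hz, hpow hy]
  linarith

theorem slowBranch_le_slowBranch {z : ℝ} (hyz : y ≤ z) (hz : z < 0) :
    slowBranch y ≤ slowBranch z :=
  Real.rpow_le_rpow_of_nonpos (neg_pos.2 hz) (neg_le_neg hyz) (by norm_num)

theorem abs_slowBranch_sub_le {z : ℝ} (hδ : 0 < δ) (hz : z ∈ Icc y (y + 2))
    (hy : 2 + 2 / δ ≤ -y) : |slowBranch z - slowBranch y| ≤ δ * slowBranch y := by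
  have hy₂ : 2 * (1 + δ) ≤ δ * -y := by
    have := mul_le_mul_of_nonneg_left hy hδ.le
    field_simp at this
    linarith
  have hz₀ : 0 < -z := by
    have : 0 < 2 / δ := by positivity
    linarith [hz.2]
  have hs := slowBranch_pos (by linarith [hz.1] : y < 0)
  rw [abs_of_nonneg (sub_nonneg.2 (slowBranch_le_slowBranch hz.1 (by linarith))),
    sub_le_iff_le_add, ← mul_le_mul_iff_right₀ hz₀]
  calc -z * slowBranch z ≤ -y * slowBranch y :=
        mul_slowBranch_le_mul_slowBranch hz.1 (by linarith)
    _ ≤ ((1 + δ) * -z) * slowBranch y := by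
      gcongr
      nlinarith [hz.2]
    _ = -z * (δ * slowBranch y + slowBranch y) := by ring

theorem force_isLittleO_of_isEquivalent_slowBranch (hu : u ~[atBot] slowBranch) :
    (fun y => y ^ 2 + a - 1 / u y ^ 3) =o[atBot] fun y => y ^ 2 := by
  have hinv : (fun y => 1 / u y ^ 3) ~[atBot] fun y => y ^ 2 := by
    refine ((hu.pow 3).inv.congr_left (Eventually.of_forall fun y => by simp)).congr_right ?_
    filter_upwards [eventually_lt_atBot 0] with y hy
    simp only [Pi.inv_apply, Pi.pow_apply]
    exact inv_eq_of_mul_eq_one_right (slowBranch_cube_mul_sq hy)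
  have ha : (fun _ : ℝ => a) =o[atBot] fun y : ℝ => y ^ 2 :=
    Asymptotics.isLittleO_const_left.2 (Or.inr tendsto_norm_sq_atBot)
  refine (ha.sub hinv.isLittleO).congr_left fun y => ?_
  simp only [Pi.sub_apply]
  ring

theorem eventually_forall_abs_sub_slowBranch_le (hu : u ~[atBot] slowBranch) (hδ : 0 < δ)
    (hδ₁ : δ ≤ 1) : ∀ᶠ y in atBot, ∀ z ∈ Icc y (y + 2),
      |u z - slowBranch y| ≤ 3 * δ * slowBranch y := by
  obtain ⟨Y, hY⟩ := eventually_atBot.1 (Asymptotics.isLittleO_iff.1 hu.isLittleO hδ)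
  filter_upwards [eventually_le_atBot (Y - 2), eventually_le_atBot (-(2 + 2 / δ))]
    with y hyY hy z hz
  have : 0 < 2 / δ := by positivity
  have hsy := slowBranch_pos (by linarith : y < 0)
  have hslow := abs_slowBranch_sub_le hδ hz (by linarith)
  have hdev := hY z (by linarith [hz.2])
  rw [Pi.sub_apply, Real.norm_eq_abs, Real.norm_eq_abs,
    abs_of_pos (slowBranch_pos (by linarith [hz.2] : z < 0))] at hdev
  have hsz : slowBranch z ≤ 2 * slowBranch y := by
    have : δ * slowBranch y ≤ 1 * slowBranch y := by gcongr
    linarith [le_abs_self (slowBranch z - slowBranch y)]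
  calc |u z - slowBranch y| ≤ |u z - slowBranch z| + |slowBranch z - slowBranch y| :=
        abs_sub_le _ _ _
    _ ≤ δ * (2 * slowBranch y) + δ * slowBranch y := by
      gcongr
      exact hdev.trans (by gcongr)
    _ = 3 * δ * slowBranch y := by ring

theorem eventually_forall_abs_force_le (hu : u ~[atBot] slowBranch) (hδ : 0 < δ) :
    ∀ᶠ y in atBot, ∀ z ∈ Icc y (y + 2), |z ^ 2 + a - 1 / u z ^ 3| ≤ δ * y ^ 2 := by
  obtain ⟨Y, hY⟩ := eventually_atBot.1
    (Asymptotics.isLittleO_iff.1 (force_isLittleO_of_isEquivalent_slowBranch (a := a) hu) hδ)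
  filter_upwards [eventually_le_atBot (Y - 2), eventually_le_atBot (-2)] with y hyY hy z hz
  have hforce := hY z (by linarith [hz.2])
  rw [Real.norm_eq_abs, norm_pow, Real.norm_eq_abs, sq_abs] at hforce
  have : z ^ 2 ≤ y ^ 2 := sq_le_sq.2 (abs_le_abs_of_nonpos (by linarith [hz.2]) hz.1)
  exact hforce.trans (by gcongr)

theorem slowBranch_le_mul_cosRoot_pow (hy : y ≤ -1) : slowBranch y ≤ 2 * cosRoot y ^ 6 := by
  have hc := cosRoot_pos y
  refine le_of_pow_le_pow_left₀ three_ne_zero (by positivity) ?_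
  have hy₂ : 1 ≤ y ^ 2 := by nlinarith
  refine le_of_mul_le_mul_right ?_ (by positivity : 0 < y ^ 2)
  have : cosRoot y ^ 18 ≤ cosRoot y ^ 18 * y ^ 2 := le_mul_of_one_le_right (by positivity) hy₂
  linear_combination slowBranch_cube_mul_sq (by linarith : y < 0) -
    4 * cosRoot_pow_mul_one_add_sq y + 4 * this

/-- The window length `cosRoot y ^ 8` in Landau's inequality is the length of a unit interval of
the time of system (D). -/
theorem IsProfileOn.eventually_cosRoot_pow_mul_abs_le (h : IsProfileOn a u u₁ u₂ univ)
    (hu : u ~[atBot] slowBranch) (hδ : 0 < δ) (hδ₁ : δ ≤ 1) :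
    ∀ᶠ y in atBot, cosRoot y ^ 2 * |u₁ y| ≤ 26 * δ ∧ cosRoot y ^ 10 * |u₂ y| ≤ 26 * δ := by
  filter_upwards [eventually_forall_abs_sub_slowBranch_le hu hδ hδ₁,
    eventually_forall_abs_force_le (a := a) hu hδ, eventually_le_atBot (-1)] with y hdev hforce hy
  set c := cosRoot y
  have hc : 0 < c := cosRoot_pos y
  have hsub : Icc y (y + 2 * c ^ 8) ⊆ Icc y (y + 2) := Icc_subset_Icc_right (by
    linarith [pow_le_one₀ (n := 8) hc.le (cosRoot_le_one y)])
  obtain ⟨h₁, h₂⟩ := (h.toJetOn.mono (subset_univ _)).mul_abs_le_of_abs_sub_le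
    (pow_nonneg hc.le 8) (fun z hz => hdev z (hsub hz)) fun z hz => hforce z (hsub hz)
  have hs : δ * slowBranch y ≤ δ * (2 * c ^ 6) := by
    gcongr
    exact slowBranch_le_mul_cosRoot_pow hy
  have hsq : δ * y ^ 2 * (c ^ 8) ^ 3 ≤ δ * c ^ 6 := by
    have : y ^ 2 * c ^ 18 ≤ 1 := (sq_mul_cosRoot_pow y).trans_le (Real.sin_sq_le_one _)
    calc δ * y ^ 2 * (c ^ 8) ^ 3 = δ * (y ^ 2 * c ^ 18) * c ^ 6 := by ring
      _ ≤ δ * 1 * c ^ 6 := by gcongr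
      _ = δ * c ^ 6 := by ring
  have : 0 < δ * c ^ 6 := by positivity
  have hc₆ : 0 < c ^ 6 := by positivity
  constructor <;> refine le_of_mul_le_mul_left ?_ hc₆ <;> linarith

theorem IsProfileOn.tendsto_cosRoot_pow_mul (h : IsProfileOn a u u₁ u₂ univ)
    (hu : u ~[atBot] slowBranch) : Tendsto (fun y => cosRoot y ^ 2 * u₁ y) atBot (𝓝 0) ∧
      Tendsto (fun y => cosRoot y ^ 10 * u₂ y) atBot (𝓝 0) := by
  have hsmall : ∀ ε > 0, ∀ᶠ y in atBot,
      ‖cosRoot y ^ 2 * u₁ y‖ < ε ∧ ‖cosRoot y ^ 10 * u₂ y‖ < ε := fun ε hε => by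
    have hδ : 0 < min 1 (ε / 52) := lt_min one_pos (by positivity)
    filter_upwards [h.eventually_cosRoot_pow_mul_abs_le hu hδ (min_le_left _ _)] with y hy
    have hc := cosRoot_pos y
    have : min 1 (ε / 52) ≤ ε / 52 := min_le_right _ _
    simp only [norm_mul, Real.norm_eq_abs, abs_of_pos (pow_pos hc _)]
    exact ⟨by linarith [hy.1], by linarith [hy.2]⟩
  exact ⟨NormedAddGroup.tendsto_nhds_zero.2 fun ε hε => (hsmall ε hε).mono fun _ => And.left,
    NormedAddGroup.tendsto_nhds_zero.2 fun ε hε => (hsmall ε hε).mono fun _ => And.right⟩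

end Asymptotics

/-! ### Transformation to system (D) -/

section TimeChange

theorem exists_orderIso_hasDerivAt_inv {f : ℝ → ℝ} {c : ℝ} (hf : Continuous f) (hc : 0 < c)
    (hcf : ∀ x, c ≤ f x) : ∃ X : ℝ ≃o ℝ, ∀ t, HasDerivAt X (f (X t))⁻¹ t := by
  set G : ℝ → ℝ := fun x => ∫ s in 0..x, f s
  have hG : ∀ x, HasDerivAt G (f x) x := fun x => hf.integral_hasStrictDerivAt 0 x |>.hasDerivAt
  have hf₀ : ∀ x, 0 < f x := fun x => hc.trans_le (hcf x)
  have hmono : StrictMono G := strictMono_of_deriv_pos fun x => (hG x).deriv ▸ hf₀ x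
  have hsub : Monotone fun x => G x - c * x := by
    have hd : ∀ x, HasDerivAt (fun x => G x - c * x) (f x - c) x := fun x =>
      (hG x).fun_sub (((hasDerivAt_id x).const_mul c).congr_deriv (mul_one c))
    exact monotone_of_deriv_nonneg (fun x => (hd x).differentiableAt) fun x =>
      (hd x).deriv ▸ sub_nonneg.2 (hcf x)
  have htop : Tendsto G atTop atTop :=
    tendsto_atTop_mono' _ ((eventually_ge_atTop 0).mono fun x hx => le_sub_iff_add_le.1 (hsub hx))
      (tendsto_atTop_add_const_left _ (G 0 - c * 0) (tendsto_id.const_mul_atTop hc))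
  have hbot : Tendsto G atBot atBot :=
    tendsto_atBot_mono' _ ((eventually_le_atBot 0).mono fun x hx => sub_le_iff_le_add.1 (hsub hx))
      (tendsto_atBot_add_const_left _ (G 0 - c * 0) (tendsto_id.const_mul_atBot hc))
  have hcont : Continuous G := continuous_iff_continuousAt.2 fun x => (hG x).continuousAt
  let E := hmono.orderIsoOfSurjective G (hcont.surjective htop hbot)
  exact ⟨E.symm, fun t => .of_local_left_inverse E.symm.continuous.continuousAt (hG _)
    (hf₀ _).ne' (Eventually.of_forall E.apply_symm_apply)⟩

theorem exists_orderIso_hasDerivAt_cosRoot_pow :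
    ∃ X : ℝ ≃o ℝ, ∀ t, HasDerivAt X (cosRoot (X t) ^ 8) t := by
  have hcont : Continuous cosRoot :=
    continuous_iff_continuousAt.2 fun x => (hasDerivAt_cosRoot x).continuousAt
  obtain ⟨X, hX⟩ := exists_orderIso_hasDerivAt_inv
    ((hcont.pow 8).inv₀ fun x => (pow_pos (cosRoot_pos x) 8).ne') one_pos fun x =>
      one_le_inv₀ (pow_pos (cosRoot_pos x) 8) |>.2 (pow_le_one₀ (cosRoot_pos x).le
        (cosRoot_le_one x))
  exact ⟨X, fun t => by simpa only [Pi.inv_apply, Pi.pow_apply, inv_inv] using hX t⟩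

end TimeChange

section Transformation

/-- The component `Φ` of the solution of system (D) given by the profile `u`, at the point with
`θ = arctan x`. -/
noncomputable def profilePhi (u : ℝ → ℝ) (x : ℝ) : ℝ :=
  u (-x) / cosRoot x ^ 6

/-- The component `W` of the solution of system (D) given by a profile with derivative `u₁`, at the
point with `θ = arctan x`. -/
noncomputable def profileW (u u₁ : ℝ → ℝ) (x : ℝ) : ℝ :=
  2 / 3 * Real.sin (Real.arctan x) * cosRoot x ^ 17 * profilePhi u x - cosRoot x ^ 2 * u₁ (-x)

/-- The component `Ψ` of the solution of system (D) given by a profile with first derivatives `u₁`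
and `u₂`, at the point with `θ = arctan x`. -/
noncomputable def profilePsi (u u₁ u₂ : ℝ → ℝ) (x : ℝ) : ℝ :=
  (2 / 3 * cosRoot x ^ 18 - 22 / 27 * Real.sin (Real.arctan x) ^ 2) * cosRoot x ^ 34 *
    profilePhi u x - 4 / 9 * Real.sin (Real.arctan x) * cosRoot x ^ 17 * (cosRoot x ^ 2 * u₁ (-x)) +
    cosRoot x ^ 10 * u₂ (-x)

variable {a x : ℝ} {u u₁ u₂ : ℝ → ℝ}

theorem hasDerivAt_cosRoot_pow (k : ℕ) (x : ℝ) : HasDerivAt (fun x => cosRoot x ^ k)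
    (-(k / 9) * Real.sin (Real.arctan x) * cosRoot x ^ (k + 9)) x := by
  refine ((hasDerivAt_cosRoot x).fun_pow k).congr_deriv ?_
  rcases k with - | k
  · simp
  · simp only [Nat.add_sub_cancel]
    ring

theorem hasDerivAt_comp_neg {𝕜 E : Type*} [NontriviallyNormedField 𝕜] [NormedAddCommGroup E]
    [NormedSpace 𝕜 E] {f : 𝕜 → E} {f' : E} {x : 𝕜} (hf : HasDerivAt f f' (-x)) :
    HasDerivAt (fun x => f (-x)) (-f') x :=
  (hf.scomp x (hasDerivAt_neg x)).congr_deriv (by simp)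

theorem hasDerivAt_profilePhi (hu : HasDerivAt u (u₁ (-x)) (-x)) :
    HasDerivAt (profilePhi u) (profileW u u₁ x / cosRoot x ^ 8) x := by
  have hc := cosRoot_pos x
  refine ((hasDerivAt_comp_neg hu).fun_div (hasDerivAt_cosRoot_pow 6 x)
    (pow_pos hc 6).ne').congr_deriv ?_
  rw [profileW, profilePhi]
  field_simp
  push_cast
  ring

theorem hasDerivAt_profileW (hu : HasDerivAt u (u₁ (-x)) (-x))
    (hu₁ : HasDerivAt u₁ (u₂ (-x)) (-x)) :
    HasDerivAt (profileW u u₁) (profilePsi u u₁ u₂ x / cosRoot x ^ 8) x := by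
  have : 0 < cosRoot x := cosRoot_pos x
  refine (((((hasDerivAt_sin_arctan x).const_mul (2 / 3)).fun_mul
    (hasDerivAt_cosRoot_pow 17 x)).fun_mul (hasDerivAt_profilePhi hu)).fun_sub
    ((hasDerivAt_cosRoot_pow 2 x).fun_mul (hasDerivAt_comp_neg hu₁))).congr_deriv ?_
  rw [profilePsi, profileW]
  field_simp
  push_cast
  ring

theorem cosRoot_pow_mul_force (hx : u (-x) ≠ 0) :
    cosRoot x ^ 18 * (x ^ 2 + a - 1 / u (-x) ^ 3) =
      Real.sin (Real.arctan x) ^ 2 + a * cosRoot x ^ 18 - 1 / profilePhi u x ^ 3 := by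
  have : 0 < cosRoot x := cosRoot_pos x
  rw [profilePhi, ← sq_mul_cosRoot_pow]
  field_simp

theorem dPsi_arctan (a Φ W Ψ x : ℝ) : dPsi a Φ W Ψ (Real.arctan x) =
    1 / Φ ^ 3 - Real.sin (Real.arctan x) ^ 2 - a * cosRoot x ^ 18 -
    ((16 / 3 * Real.sin (Real.arctan x) - 224 / 27 * Real.sin (Real.arctan x) ^ 3) *
        cosRoot x ^ 51 * Φ +
      (208 / 81 * Real.sin (Real.arctan x) ^ 2 - 10 / 9) * cosRoot x ^ 34 * W +
      2 / 3 * Real.sin (Real.arctan x) * cosRoot x ^ 17 * Ψ) := by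
  rw [dPsi, cos_arctan_rpow x 51 (by norm_num), cos_arctan_rpow x 34 (by norm_num),
    cos_arctan_rpow x 17 (by norm_num), cos_arctan_eq_cosRoot_pow]
  linear_combination sin_arctan_sq_add_cosRoot_pow x

theorem hasDerivAt_profilePsi (hu : HasDerivAt u (u₁ (-x)) (-x))
    (hu₁ : HasDerivAt u₁ (u₂ (-x)) (-x))
    (hu₂ : HasDerivAt u₂ (x ^ 2 + a - 1 / u (-x) ^ 3) (-x)) (hx : u (-x) ≠ 0) :
    HasDerivAt (profilePsi u u₁ u₂) (dPsi a (profilePhi u x) (profileW u u₁ x)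
      (profilePsi u u₁ u₂ x) (Real.arctan x) / cosRoot x ^ 8) x := by
  have hc := cosRoot_pos x
  have hsin := hasDerivAt_sin_arctan x
  refine (((((((hasDerivAt_cosRoot_pow 18 x).const_mul (2 / 3)).fun_sub
    ((hsin.fun_pow 2).const_mul (22 / 27))).fun_mul (hasDerivAt_cosRoot_pow 34 x)).fun_mul
    (hasDerivAt_profilePhi hu)).fun_sub (((hsin.const_mul (4 / 9)).fun_mul
    (hasDerivAt_cosRoot_pow 17 x)).fun_mul ((hasDerivAt_cosRoot_pow 2 x).fun_mul
    (hasDerivAt_comp_neg hu₁)))).fun_add ((hasDerivAt_cosRoot_pow 10 x).fun_mul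
    (hasDerivAt_comp_neg hu₂))).congr_deriv ?_
  have hW := div_mul_cancel₀ (profileW u u₁ x) (pow_pos hc 8).ne'
  generalize profileW u u₁ x / cosRoot x ^ 8 = w at hW ⊢
  rw [eq_div_iff (pow_pos hc 8).ne', dPsi_arctan, profilePsi]
  rw [profileW] at hW ⊢
  push_cast
  linear_combination
    (2 / 3 * cosRoot x ^ 18 - 22 / 27 * Real.sin (Real.arctan x) ^ 2) * cosRoot x ^ 34 * hW -
    cosRoot_pow_mul_force (a := a) hx +
    (10 / 9 * cosRoot x ^ 34 * (2 / 3 * Real.sin (Real.arctan x) * cosRoot x ^ 17 *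
      profilePhi u x - cosRoot x ^ 2 * u₁ (-x)) - 16 / 3 * Real.sin (Real.arctan x) *
      cosRoot x ^ 51 * profilePhi u x) * sin_arctan_sq_add_cosRoot_pow x

theorem IsProfileOn.solD (h : IsProfileOn a u u₁ u₂ univ) {X : ℝ → ℝ}
    (hX : ∀ t, HasDerivAt X (cosRoot (X t) ^ 8) t) :
    SolD a (profilePhi u ∘ X) (profileW u u₁ ∘ X) (profilePsi u u₁ u₂ ∘ X) (Real.arctan ∘ X) := by
  intro t
  have hc := (pow_pos (cosRoot_pos (X t)) 8).ne'
  have hu := h.hasDerivAt _ (mem_univ (-X t))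
  have hu₁ := h.hasDerivAt₁ _ (mem_univ (-X t))
  have hu₂ := h.hasDerivAt₂ _ (mem_univ (-X t))
  rw [neg_sq] at hu₂
  have hcomp : ∀ {f : ℝ → ℝ} {d : ℝ}, HasDerivAt f (d / cosRoot (X t) ^ 8) (X t) →
      HasDerivAt (f ∘ X) d t := fun hf => (hf.comp t (hX t)).congr_deriv (div_mul_cancel₀ _ hc)
  refine ⟨hcomp (hasDerivAt_profilePhi hu), hcomp (hasDerivAt_profileW hu hu₁),
    hcomp (hasDerivAt_profilePsi hu hu₁ hu₂ (h.pos _ (mem_univ _)).ne'),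
    hcomp ((Real.hasDerivAt_arctan _).congr_deriv ?_)⟩
  rw [Function.comp_apply, cos_arctan_rpow _ 26 (by norm_num), div_eq_div_iff (by positivity) hc]
  linear_combination -cosRoot (X t) ^ 8 * cosRoot_pow_mul_one_add_sq (X t)

theorem profilePhi_pos (hx : 0 < u (-x)) : 0 < profilePhi u x :=
  div_pos hx (pow_pos (cosRoot_pos x) 6)

end Transformation

section Limits

variable {a : ℝ} {u u₁ u₂ : ℝ → ℝ}

theorem tendsto_profilePhi (hu : u ~[atBot] slowBranch) :
    Tendsto (profilePhi u) atTop (𝓝 1) := by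
  have hpos : ∀ x, cosRoot x ^ 6 ≠ 0 := fun x => (pow_pos (cosRoot_pos x) 6).ne'
  have := (Asymptotics.isEquivalent_iff_tendsto_one (Eventually.of_forall hpos)).1
    (hu.trans cosRoot_pow_isEquivalent_slowBranch.symm)
  refine (this.comp tendsto_neg_atTop_atBot).congr fun x => ?_
  rw [Function.comp_apply, Pi.div_apply, cosRoot_neg, profilePhi]

theorem tendsto_sin_arctan_atTop :
    Tendsto (fun x => Real.sin (Real.arctan x)) atTop (𝓝 1) :=
  Real.sin_pi_div_two ▸ (Real.continuous_sin.tendsto _).comp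
    (Real.tendsto_arctan_atTop.mono_right nhdsWithin_le_nhds)

theorem IsProfileOn.tendsto_profileW_profilePsi (h : IsProfileOn a u u₁ u₂ univ)
    (hu : u ~[atBot] slowBranch) :
    Tendsto (profileW u u₁) atTop (𝓝 0) ∧ Tendsto (profilePsi u u₁ u₂) atTop (𝓝 0) := by
  have hneg : ∀ {f : ℝ → ℝ} {k : ℕ}, Tendsto (fun y => cosRoot y ^ k * f y) atBot (𝓝 0) →
      Tendsto (fun x => cosRoot x ^ k * f (-x)) atTop (𝓝 0) := fun hf =>
    (hf.comp tendsto_neg_atTop_atBot).congr fun x => by rw [Function.comp_apply, cosRoot_neg]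
  have hΦ := tendsto_profilePhi hu
  have hsin := tendsto_sin_arctan_atTop
  have hcos := tendsto_cosRoot_atTop
  obtain ⟨hu₁, hu₂⟩ := h.tendsto_cosRoot_pow_mul hu
  refine ⟨?_, ?_⟩
  · unfold profileW
    simpa using (((hsin.const_mul (2 / 3)).mul (hcos.pow 17)).mul hΦ).sub (hneg hu₁)
  · unfold profilePsi
    simpa using ((((((hcos.pow 18).const_mul (2 / 3)).sub ((hsin.pow 2).const_mul (22 / 27))).mul
      (hcos.pow 34)).mul hΦ).sub (((hsin.const_mul (4 / 9)).mul (hcos.pow 17)).mul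
      (hneg hu₁))).add (hneg hu₂)

theorem one_le_force_of_two_lt_profilePhi {y : ℝ} (hy : 2 + |a| ≤ y)
    (hΦ : 2 < profilePhi u (-y)) : 1 ≤ y ^ 2 + a - 1 / u y ^ 3 := by
  rw [profilePhi, neg_neg, cosRoot_neg, lt_div_iff₀ (pow_pos (cosRoot_pos y) 6)] at hΦ
  have hc := cosRoot_pos y
  have : 1 / u y ^ 3 ≤ (1 + y ^ 2) / 8 := by
    calc 1 / u y ^ 3 ≤ 1 / (2 * cosRoot y ^ 6) ^ 3 := by gcongr
      _ = (1 + y ^ 2) / 8 := by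
        rw [div_eq_div_iff (by positivity) (by norm_num)]
        linear_combination -8 * cosRoot_pow_mul_one_add_sq y
  nlinarith [neg_abs_le a, abs_nonneg a]

theorem IsProfileOn.frequently_profilePhi_le_two (h : IsProfileOn a u u₁ u₂ univ)
    (hesc : ∀ y, 0 ≤ y → ¬ IsEscaping a u u₁ u₂ y) : ∃ᶠ x in atBot, profilePhi u x ≤ 2 := by
  intro hlarge
  obtain ⟨s, hs⟩ := eventually_atTop.1 (((tendsto_neg_atTop_atBot.eventually hlarge).and
    (eventually_ge_atTop (2 + |a|))).mono fun y hy =>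
      one_le_force_of_two_lt_profilePhi hy.2 (not_le.1 hy.1))
  obtain ⟨y, ⟨hu₁, hu₂⟩, hys, hy⟩ := ((((h.toJetOn.mono (subset_univ _)).eventually_pos_of_le
    one_pos hs).and ((eventually_ge_atTop s).and (eventually_ge_atTop 0)))).exists
  exact hesc y hy ⟨hu₁, hu₂, by linarith [hs y hys]⟩

end Limits

/-- there is a global solution of system (D) converging to `p₊` as `τ → +∞`,
with `θ → -π/2` as `τ → -∞` and `liminf_{τ→-∞} Φ(τ) < ∞`. -/
theorem exists_shooting_solution (a : ℝ) :
    ∃ Φ W Ψ θ : ℝ → ℝ, SolD a Φ W Ψ θ ∧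
      (∀ τ : ℝ, 0 < Φ τ) ∧
      (∀ τ : ℝ, θ τ ∈ Set.Ioo (-(Real.pi / 2)) (Real.pi / 2)) ∧
      Tendsto (fun τ => (Φ τ, W τ, Ψ τ, θ τ)) atTop
        (nhds ((1 : ℝ), (0 : ℝ), (0 : ℝ), Real.pi / 2)) ∧
      Tendsto θ atBot (nhds (-(Real.pi / 2))) ∧
      Filter.liminf (fun τ : ℝ => ((Φ τ : ℝ) : EReal)) atBot < ⊤ := by
  obtain ⟨u, u₁, u₂, h, hesc, hu⟩ := exists_profile a
  obtain ⟨X, hX⟩ := exists_orderIso_hasDerivAt_cosRoot_pow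
  have hθ := Real.tendsto_arctan_atTop.mono_right nhdsWithin_le_nhds
  obtain ⟨hW, hΨ⟩ := h.tendsto_profileW_profilePsi hu
  have hfreq : ∃ᶠ τ in atBot, profilePhi u (X τ) ≤ 2 := by
    rw [← frequently_map (m := X) (P := (profilePhi u · ≤ 2)), X.map_atBot]
    exact h.frequently_profilePhi_le_two hesc
  refine ⟨profilePhi u ∘ X, profileW u u₁ ∘ X, profilePsi u u₁ u₂ ∘ X, Real.arctan ∘ X, h.solD hX,
    fun τ => profilePhi_pos (h.pos _ (mem_univ _)), fun τ => Real.arctan_mem_Ioo _,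
    ((tendsto_profilePhi hu).prodMk_nhds (hW.prodMk_nhds (hΨ.prodMk_nhds hθ))).comp X.tendsto_atTop,
    (Real.tendsto_arctan_atBot.mono_right nhdsWithin_le_nhds).comp X.tendsto_atBot, ?_⟩
  exact (liminf_le_of_frequently_le' (hfreq.mono fun τ hτ => EReal.coe_le_coe hτ)).trans_lt
    (EReal.coe_lt_top 2)
end

section
/- Fix a ∈ ℝ and let (Φ, W, Ψ, θ) be a solution of system (D) defined for all τ ∈ ℝ with Φ(τ) > 0 and θ(τ) ∈ (−π/2, π/2) for all τ. Suppose liminf_{τ→−∞} Φ(τ) < ∞ and limsup_{τ→−∞} ( Φ(τ) + |W(τ)| + |Ψ(τ)| ) = ∞. Then there exist a strictly decreasing sequence (τₙ*) with τₙ* → −∞ and positive numbers εₙ such that, for every n, Φ(τₙ*) = max_{τ ∈ [τₙ* − εₙ, τₙ* + εₙ]} Φ(τ), and moreover limsup_{n→∞} Φ(τₙ*) = ∞. -/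
open Filter Set

/-!
If `Φ` were bounded near `-∞`, then `W` and `Ψ` would be bounded as well, against the assumption on
the limsup. Indeed, the `Ψ`-equation reads `Ψ' = F - (A Φ + (C' + D) W + C Ψ)` with bounded `C¹`
coefficients and `F` bounded below, so `H = W + C Φ` and `G = Ψ + C W + D Φ` satisfy
`Φ' = H + O(1)`, `H' = G + O(1)`, `G' ≥ -O(1)`; a Landau-type inequality, in which only a one-sided
bound on the highest derivative is needed, bounds `G` and `H`. Hence `Φ` is unbounded near `-∞`,
while it returns infinitely often below a fixed level; between two such returns it has a local
maximum, and these maxima can be made as high as desired.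
-/

open Asymptotics
open scoped fwdDiff

section LocalMaxima

theorem exists_isMaxOn_Icc_of_isLocalMax {β : Type*} [Preorder β] {f : ℝ → β} {x : ℝ}
    (hf : IsLocalMax f x) : ∃ ε > 0, IsMaxOn f (Icc (x - ε) (x + ε)) x := by
  obtain ⟨ε, hε, hmax⟩ := Metric.nhds_basis_closedBall.eventually_iff.1 hf
  exact ⟨ε, hε, fun y hy => hmax (Real.closedBall_eq_Icc ▸ hy)⟩

theorem frequently_atBot_isLocalMax_of_oscillation {α β : Type*}
    [ConditionallyCompleteLinearOrder α] [Nonempty α] [TopologicalSpace α] [OrderTopology α]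
    [LinearOrder β] [TopologicalSpace β] [ClosedIciTopology β] {f : α → β} {m N : β}
    (hf : ∀ᶠ t in atBot, ContinuousAt f t) (hlow : ∃ᶠ t in atBot, f t < m)
    (hhigh : ∃ᶠ t in atBot, max m N < f t) :
    ∃ᶠ t in atBot, IsLocalMax f t ∧ N < f t := by
  obtain ⟨T, hT⟩ := eventually_atBot.1 hf
  rw [frequently_atBot] at hlow hhigh ⊢
  intro S
  obtain ⟨b, hb, hfb⟩ := hlow (min S T)
  obtain ⟨z, hzb, hfz⟩ := hhigh b
  obtain ⟨c, hcz, hfc⟩ := hlow z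
  have hcont : ContinuousOn f (Icc c b) := fun t ht =>
    (hT t (ht.2.trans (hb.trans (min_le_right S T)))).continuousWithinAt
  have hends : ∀ t ∈ Icc c b \ Ioo c b, f t < f z := by
    rw [Icc_sdiff_Ioo_same (hcz.trans hzb)]
    rintro t (rfl | rfl)
    exacts [hfc.trans ((le_max_left m N).trans_lt hfz), hfb.trans ((le_max_left m N).trans_lt hfz)]
  obtain ⟨t, ht, hmax⟩ := isCompact_Icc.exists_isMaxOn_mem_subset hcont ⟨hcz, hzb⟩ hends
  exact ⟨t, ht.2.le.trans (hb.trans (min_le_left S T)), hmax.isLocalMax (Icc_mem_nhds ht.1 ht.2),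
    ((le_max_right m N).trans_lt hfz).trans_le (hmax ⟨hcz, hzb⟩)⟩

theorem exists_strictAnti_seq_of_frequently_atBot {α β : Type*} [LinearOrder α] [NoMinOrder α]
    [Nonempty α] [(atBot : Filter α).IsCountablyGenerated] [LinearOrder β] [Nonempty β]
    [(atTop : Filter β).IsCountablyGenerated] {f : α → β} {p : α → Prop}
    (h : ∀ N, ∃ᶠ t in atBot, p t ∧ N < f t) :
    ∃ u : ℕ → α, StrictAnti u ∧ Tendsto u atTop atBot ∧ (∀ n, p (u n)) ∧
      Tendsto (f ∘ u) atTop atTop := by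
  have hfreq : ∃ᶠ t in atBot ⊓ comap f atTop, p t := by
    rw [(atBot_basis.inf (atTop_basis.comap f)).frequently_iff]
    rintro ⟨T, N⟩ -
    obtain ⟨t, ht, hpt, hft⟩ := frequently_atBot.1 (h N) T
    exact ⟨t, ⟨ht, hft.le⟩, hpt⟩
  obtain ⟨u, hu, hpu⟩ := exists_seq_forall_of_frequently hfreq
  obtain ⟨hbot, htop⟩ := tendsto_inf.1 hu
  obtain ⟨φ, hφ, hanti⟩ := strictMono_subseq_of_tendsto_atTop (β := αᵒᵈ) hbot
  exact ⟨u ∘ φ, hanti, hbot.comp hφ.tendsto_atTop, fun n => hpu (φ n),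
    (tendsto_comap_iff.1 htop).comp hφ.tendsto_atTop⟩

end LocalMaxima

section Boundedness

variable {α : Type*} {l : Filter α} {f g : α → ℝ}

theorem isBigO_one_mul (hf : f =O[l] (1 : α → ℝ)) (hg : g =O[l] (1 : α → ℝ)) :
    (fun t => f t * g t) =O[l] (1 : α → ℝ) :=
  (hf.mul hg).trans_eventuallyEq (.of_forall fun _ => mul_one _)

theorem isBoundedUnder_le_and_ge_of_isBigO_one (hf : f =O[l] (1 : α → ℝ)) :
    IsBoundedUnder (· ≤ ·) l f ∧ IsBoundedUnder (· ≥ ·) l f :=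
  isBoundedUnder_le_abs.1 ((isBigO_one_iff ℝ).1 hf)

theorem isBigO_one_comp_of_continuous {X : Type*} [TopologicalSpace X] {k : X → ℝ} {x : α → X}
    {s : Set X} (hk : Continuous k) (hs : IsCompact s) (hx : ∀ᶠ t in l, x t ∈ s) :
    (fun t => k (x t)) =O[l] (1 : α → ℝ) := by
  obtain ⟨C, hC⟩ := hs.exists_bound_of_continuousOn hk.continuousOn
  refine .of_bound C (hx.mono fun t ht => ?_)
  simpa using hC (x t) ht

theorem limsup_coe_ereal_lt_top (hf : IsBoundedUnder (· ≤ ·) l f) :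
    limsup (fun t => (f t : EReal)) l < ⊤ := by
  obtain ⟨C, hC⟩ := hf.eventually_le
  exact (limsup_le_of_le (h := hC.mono fun t => EReal.coe_le_coe)).trans_lt (EReal.coe_lt_top C)

theorem exists_frequently_lt_of_liminf_coe_ereal_lt_top
    (hf : liminf (fun t => (f t : EReal)) l < ⊤) : ∃ m, ∃ᶠ t in l, f t < m := by
  obtain ⟨m, hm, -⟩ := EReal.lt_iff_exists_real_btwn.1 hf
  exact ⟨m, (frequently_lt_of_liminf_lt (h := hm)).mono fun t => EReal.coe_lt_coe_iff.1⟩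

end Boundedness

section Landau

variable {f f' h h' p : ℝ → ℝ} {t : ℝ}

theorem tendsto_add_one_atBot : Tendsto (fun t : ℝ => t + 1) atBot atBot :=
  tendsto_atBot_add_const_right _ 1 tendsto_id

theorem tendsto_sub_one_atBot : Tendsto (fun t : ℝ => t - 1) atBot atBot :=
  tendsto_atBot_add_const_right _ (-1) tendsto_id

theorem exists_eq_fwdDiff_of_hasDerivAt (hf : ∀ s ∈ Icc t (t + 1), HasDerivAt f (f' s) s) :
    ∃ c ∈ Ioo t (t + 1), f' c = Δ_[1] f t := by
  obtain ⟨c, hc, hslope⟩ := exists_hasDerivAt_eq_slope f f' (lt_add_one t)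
    (fun s hs => (hf s hs).continuousAt.continuousWithinAt)
    (fun s hs => hf s (Ioo_subset_Icc_self hs))
  exact ⟨c, hc, by rw [hslope, add_sub_cancel_left, div_one, fwdDiff]⟩

theorem fwdDiff_isBigO_one (hf : f =O[atBot] (1 : ℝ → ℝ)) : Δ_[1] f =O[atBot] (1 : ℝ → ℝ) :=
  (hf.comp_tendsto tendsto_add_one_atBot).sub hf

theorem isBoundedUnder_ge_fwdDiff (hf : ∀ᶠ t in atBot, HasDerivAt f (f' t) t)
    (hf' : IsBoundedUnder (· ≥ ·) atBot f') : IsBoundedUnder (· ≥ ·) atBot (Δ_[1] f) := by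
  obtain ⟨B, hB⟩ := hf'.eventually_ge
  refine isBoundedUnder_of_eventually_ge (a := B) ?_
  filter_upwards [tendsto_add_one_atBot.eventually_forall_le_atBot (hf.and hB)] with t ht
  obtain ⟨c, hc, hcΔ⟩ := exists_eq_fwdDiff_of_hasDerivAt fun s hs => (ht s hs.2).1
  exact hcΔ ▸ (ht c hc.2.le).2

theorem hasDerivAt_fwdDiff (hf : ∀ᶠ t in atBot, HasDerivAt f (f' t) t) :
    ∀ᶠ t in atBot, HasDerivAt (Δ_[1] f) (Δ_[1] f' t) t := by
  filter_upwards [hf, tendsto_add_one_atBot.eventually hf] with t ht ht₁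
  exact (ht₁.comp_add_const t 1).sub ht

theorem abs_le_of_abs_fwdDiff_le {K P C : ℝ} (hC : 0 ≤ C)
    (hf : ∀ s ∈ Icc (t - 1) (t + 1), HasDerivAt f (h s + p s) s)
    (hh : ∀ s ∈ Icc (t - 1) (t + 1), HasDerivAt h (h' s) s)
    (hp : ∀ s ∈ Icc (t - 1) (t + 1), |p s| ≤ P) (hh' : ∀ s ∈ Icc (t - 1) (t + 1), -C ≤ h' s)
    (hleft : |Δ_[1] f (t - 1)| ≤ K) (hright : |Δ_[1] f t| ≤ K) : |h t| ≤ K + P + C := by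
  have hdrop : ∀ x ∈ Icc (t - 1) (t + 1), ∀ y ∈ Icc (t - 1) (t + 1), x ≤ y →
      -C * (y - x) ≤ h y - h x :=
    (convex_Icc _ _).mul_sub_le_image_sub_of_le_deriv
      (fun s hs => (hh s hs).continuousAt.continuousWithinAt)
      (fun s hs => (hh s (interior_subset hs)).differentiableAt.differentiableWithinAt)
      (fun s hs => (hh s (interior_subset hs)).deriv ▸ hh' s (interior_subset hs))
  have ht : t ∈ Icc (t - 1) (t + 1) := ⟨by linarith, by linarith⟩
  have hlower : -(K + P + C) ≤ h t := by
    obtain ⟨c, hc, hcΔ⟩ := exists_eq_fwdDiff_of_hasDerivAt (f := f) (t := t - 1)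
      fun s hs => hf s ⟨hs.1, by linarith [hs.2]⟩
    have hct : c < t := by linarith [hc.2]
    have hcI : c ∈ Icc (t - 1) (t + 1) := ⟨hc.1.le, by linarith⟩
    nlinarith [hdrop c hcI t ht hct.le, hc.1, (abs_le.1 (hp c hcI)).2, (abs_le.1 hleft).1]
  have hupper : h t ≤ K + P + C := by
    obtain ⟨c, hc, hcΔ⟩ := exists_eq_fwdDiff_of_hasDerivAt (f := f) (t := t)
      fun s hs => hf s ⟨by linarith [hs.1], hs.2⟩
    have hcI : c ∈ Icc (t - 1) (t + 1) := ⟨by linarith [hc.1], hc.2.le⟩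
    nlinarith [hdrop t ht c hcI hc.1.le, hc.2, (abs_le.1 (hp c hcI)).1, (abs_le.1 hright).2]
  exact abs_le.2 ⟨hlower, hupper⟩

theorem isBigO_one_of_fwdDiff_isBigO_one (hf : ∀ᶠ t in atBot, HasDerivAt f (h t + p t) t)
    (hh : ∀ᶠ t in atBot, HasDerivAt h (h' t) t) (hΔf : Δ_[1] f =O[atBot] (1 : ℝ → ℝ))
    (hp : p =O[atBot] (1 : ℝ → ℝ)) (hh' : IsBoundedUnder (· ≥ ·) atBot h') :
    h =O[atBot] (1 : ℝ → ℝ) := by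
  obtain ⟨K, hK⟩ := hΔf.bound
  obtain ⟨P, hP⟩ := hp.bound
  obtain ⟨B, hB⟩ := hh'.eventually_ge
  simp only [Pi.one_apply, norm_one, mul_one, Real.norm_eq_abs] at hK hP
  refine .of_bound (K + P + |B|) ?_
  filter_upwards [hK, tendsto_sub_one_atBot.eventually hK,
    tendsto_add_one_atBot.eventually_forall_le_atBot (hf.and (hh.and (hP.and hB)))]
    with t hright hleft hnear
  simpa using abs_le_of_abs_fwdDiff_le (abs_nonneg B) (fun s hs => (hnear s hs.2).1)
    (fun s hs => (hnear s hs.2).2.1) (fun s hs => (hnear s hs.2).2.2.1)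
    (fun s hs => (neg_abs_le B).trans (hnear s hs.2).2.2.2) hleft hright

end Landau

section ThirdOrder

theorem isBigO_one_of_triangular_system {Φ H G p q g : ℝ → ℝ}
    (hΦ : ∀ᶠ t in atBot, HasDerivAt Φ (H t + p t) t)
    (hH : ∀ᶠ t in atBot, HasDerivAt H (G t + q t) t) (hG : ∀ᶠ t in atBot, HasDerivAt G (g t) t)
    (bΦ : Φ =O[atBot] (1 : ℝ → ℝ)) (bp : p =O[atBot] (1 : ℝ → ℝ))
    (bq : q =O[atBot] (1 : ℝ → ℝ)) (bg : IsBoundedUnder (· ≥ ·) atBot g) :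
    H =O[atBot] (1 : ℝ → ℝ) ∧ G =O[atBot] (1 : ℝ → ℝ) := by
  -- The first difference of `H` is controlled before `H` itself, since `g` bounds `Δ G` below.
  have bΔH : Δ_[1] H =O[atBot] (1 : ℝ → ℝ) := by
    have hΔΦ : ∀ᶠ t in atBot, HasDerivAt (Δ_[1] Φ) (Δ_[1] H t + Δ_[1] p t) t :=
      (hasDerivAt_fwdDiff hΦ).mono fun t ht => ht.congr_deriv (congrFun (fwdDiff_add 1 H p) t)
    have bΔH' : IsBoundedUnder (· ≥ ·) atBot (Δ_[1] (G + q)) := by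
      rw [fwdDiff_add]
      exact isBoundedUnder_ge_add (isBoundedUnder_ge_fwdDiff hG bg)
        (isBoundedUnder_le_and_ge_of_isBigO_one (fwdDiff_isBigO_one bq)).2
    exact isBigO_one_of_fwdDiff_isBigO_one hΔΦ (hasDerivAt_fwdDiff hH)
      (fwdDiff_isBigO_one (fwdDiff_isBigO_one bΦ)) (fwdDiff_isBigO_one bp) bΔH'
  have bG : G =O[atBot] (1 : ℝ → ℝ) := isBigO_one_of_fwdDiff_isBigO_one hH hG bΔH bq bg
  have bH' : IsBoundedUnder (· ≥ ·) atBot fun t => G t + q t :=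
    (isBoundedUnder_le_and_ge_of_isBigO_one (bG.add bq)).2
  exact ⟨isBigO_one_of_fwdDiff_isBigO_one hΦ hH (fwdDiff_isBigO_one bΦ) bp bH', bG⟩

theorem isBigO_one_of_thirdOrder_equation {Φ W Ψ F A C C' D D' : ℝ → ℝ}
    (hΦ : ∀ᶠ t in atBot, HasDerivAt Φ (W t) t) (hW : ∀ᶠ t in atBot, HasDerivAt W (Ψ t) t)
    (hΨ : ∀ᶠ t in atBot,
      HasDerivAt Ψ (F t - (A t * Φ t + (C' t + D t) * W t + C t * Ψ t)) t)
    (hC : ∀ᶠ t in atBot, HasDerivAt C (C' t) t) (hD : ∀ᶠ t in atBot, HasDerivAt D (D' t) t)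
    (bΦ : Φ =O[atBot] (1 : ℝ → ℝ)) (bA : A =O[atBot] (1 : ℝ → ℝ))
    (bC : C =O[atBot] (1 : ℝ → ℝ)) (bC' : C' =O[atBot] (1 : ℝ → ℝ))
    (bD : D =O[atBot] (1 : ℝ → ℝ)) (bD' : D' =O[atBot] (1 : ℝ → ℝ))
    (bF : IsBoundedUnder (· ≥ ·) atBot F) :
    W =O[atBot] (1 : ℝ → ℝ) ∧ Ψ =O[atBot] (1 : ℝ → ℝ) := by
  let H : ℝ → ℝ := fun t => W t + C t * Φ t
  let G : ℝ → ℝ := fun t => Ψ t + C t * W t + D t * Φ t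
  have hΦH : ∀ᶠ t in atBot, HasDerivAt Φ (H t + -(C t * Φ t)) t := by
    filter_upwards [hΦ] with t hΦ
    exact hΦ.congr_deriv (by simp only [H]; ring)
  have hHG : ∀ᶠ t in atBot, HasDerivAt H (G t + (C' t - D t) * Φ t) t := by
    filter_upwards [hΦ, hW, hC] with t hΦ hW hC
    exact (hW.add (hC.mul hΦ)).congr_deriv (by simp only [G]; ring)
  have hG : ∀ᶠ t in atBot, HasDerivAt G (F t + (D' t - A t) * Φ t) t := by
    filter_upwards [hΦ, hW, hΨ, hC, hD] with t hΦ hW hΨ hC hD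
    exact ((hΨ.add (hC.mul hW)).add (hD.mul hΦ)).congr_deriv (by ring)
  have bCΦ := isBigO_one_mul bC bΦ
  obtain ⟨bH, bG⟩ := isBigO_one_of_triangular_system hΦH hHG hG bΦ bCΦ.neg_left
    (isBigO_one_mul (bC'.sub bD) bΦ)
    (isBoundedUnder_ge_add bF
      (isBoundedUnder_le_and_ge_of_isBigO_one (isBigO_one_mul (bD'.sub bA) bΦ)).2)
  have bW : W =O[atBot] (1 : ℝ → ℝ) :=
    (bH.sub bCΦ).congr_left fun t => by simp only [H]; ring
  have bΨ : Ψ =O[atBot] (1 : ℝ → ℝ) :=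
    ((bG.sub (isBigO_one_mul bC bW)).sub (isBigO_one_mul bD bΦ)).congr_left fun t => by
      simp only [G]; ring
  exact ⟨bW, bΨ⟩

end ThirdOrder

section SystemD

open Real

/-- `(Φ, W, Ψ, θ)` satisfies system (D) at the time `τ`, including the constraints `Φ > 0` and
`θ ∈ [-π/2, π/2]`. The pointwise form allows solutions that exist only near `-∞`. -/
structure IsSolutionAt (a : ℝ) (Φ W Ψ θ : ℝ → ℝ) (τ : ℝ) : Prop where
  pos : 0 < Φ τ
  angle_mem : θ τ ∈ Icc (-(π / 2)) (π / 2)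
  hasDerivAt_Φ : HasDerivAt Φ (W τ) τ
  hasDerivAt_W : HasDerivAt W (Ψ τ) τ
  hasDerivAt_Ψ : HasDerivAt Ψ (dPsi a (Φ τ) (W τ) (Ψ τ) (θ τ)) τ
  hasDerivAt_θ : HasDerivAt θ (cos (θ τ) ^ ((26 : ℝ) / 9)) τ

theorem SolD.isSolutionAt {a : ℝ} {Φ W Ψ θ : ℝ → ℝ} (hsol : SolD a Φ W Ψ θ) {τ : ℝ}
    (hΦ : 0 < Φ τ) (hθ : θ τ ∈ Icc (-(π / 2)) (π / 2)) : IsSolutionAt a Φ W Ψ θ τ :=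
  let ⟨hΦ', hW', hΨ', hθ'⟩ := hsol τ
  ⟨hΦ, hθ, hΦ', hW', hΨ', hθ'⟩

/-- The part of `Ψ'` that does not depend on `W` and `Ψ` and is bounded below. -/
noncomputable def forcing (a Φ x : ℝ) : ℝ := 1 / Φ ^ 3 - 1 - (a - 1) * cos x ^ 2

/-- The coefficient of `Φ` in `-Ψ'`, as a function of the angle. -/
noncomputable def coeffΦ (x : ℝ) : ℝ :=
  (16 / 3 * sin x - 224 / 27 * sin x ^ 3) * cos x ^ ((17 : ℝ) / 3)

/-- The coefficient of `Ψ` in `-Ψ'`, as a function of the angle. -/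
noncomputable def coeffΨ (x : ℝ) : ℝ := 2 / 3 * sin x * cos x ^ ((17 : ℝ) / 9)

/-- The derivative of `coeffΨ` along the flow `θ' = (cos θ)^(26/9)`. -/
noncomputable def flowDerivCoeffΨ (x : ℝ) : ℝ :=
  (2 / 3 - 52 / 27 * sin x ^ 2) * cos x ^ ((34 : ℝ) / 9)

/-- The coefficient of `W` in `-Ψ'` minus `flowDerivCoeffΨ`: what is left of the `W`-term after
`coeffΨ θ * Ψ + flowDerivCoeffΨ θ * W` has been written as the derivative of `coeffΨ θ * W`. -/
noncomputable def residualCoeffW (x : ℝ) : ℝ :=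
  (364 / 81 * sin x ^ 2 - 16 / 9) * cos x ^ ((34 : ℝ) / 9)

theorem dPsi_eq_forcing_sub (a Φ W Ψ x : ℝ) :
    dPsi a Φ W Ψ x = forcing a Φ x -
      (coeffΦ x * Φ + (flowDerivCoeffΨ x + residualCoeffW x) * W + coeffΨ x * Ψ) := by
  simp only [dPsi, forcing, coeffΦ, coeffΨ, flowDerivCoeffΨ, residualCoeffW]
  ring

theorem neg_one_sub_abs_le_forcing {a Φ : ℝ} (hΦ : 0 < Φ) (x : ℝ) :
    -1 - |a - 1| ≤ forcing a Φ x := by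
  have hinv : 0 < 1 / Φ ^ 3 := by positivity
  have hcos : (a - 1) * cos x ^ 2 ≤ |a - 1| :=
    (mul_le_mul_of_nonneg_right (le_abs_self _) (sq_nonneg _)).trans
      (mul_le_of_le_one_right (abs_nonneg _) (cos_sq_le_one x))
  rw [forcing]
  linarith

theorem continuous_cos_rpow {r : ℝ} (hr : 0 ≤ r) : Continuous fun x => cos x ^ r :=
  continuous_cos.rpow_const fun _ => Or.inr hr

theorem continuous_coeffΦ : Continuous coeffΦ :=
  .mul (by fun_prop) (continuous_cos_rpow (by norm_num))

theorem continuous_coeffΨ : Continuous coeffΨ :=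
  .mul (by fun_prop) (continuous_cos_rpow (by norm_num))

theorem continuous_flowDerivCoeffΨ : Continuous flowDerivCoeffΨ :=
  .mul (by fun_prop) (continuous_cos_rpow (by norm_num))

theorem contDiff_residualCoeffW : ContDiff ℝ 1 residualCoeffW :=
  .mul (by fun_prop) (contDiff_cos.rpow_const_of_le (by norm_num))

theorem hasDerivAt_coeffΨ_comp {θ : ℝ → ℝ} {τ : ℝ} (hcos : 0 ≤ cos (θ τ))
    (hθ : HasDerivAt θ (cos (θ τ) ^ ((26 : ℝ) / 9)) τ) :
    HasDerivAt (fun t => coeffΨ (θ t)) (flowDerivCoeffΨ (θ τ)) τ := by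
  refine ((hθ.sin.const_mul (2 / 3)).mul
    (hθ.cos.rpow_const (p := 17 / 9) (Or.inr (by norm_num)))).congr_deriv ?_
  have h34 : cos (θ τ) ^ ((34 : ℝ) / 9)
      = cos (θ τ) ^ ((17 : ℝ) / 9 - 1) * cos (θ τ) ^ ((26 : ℝ) / 9) := by
    rw [← rpow_add_of_nonneg hcos (by norm_num) (by norm_num)]
    norm_num
  have h17 : cos (θ τ) ^ ((17 : ℝ) / 9) = cos (θ τ) ^ ((17 : ℝ) / 9 - 1) * cos (θ τ) := by
    rw [← rpow_add_one' hcos (by norm_num), sub_add_cancel]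
  rw [flowDerivCoeffΨ, h34, h17]
  linear_combination
    2 / 3 * cos (θ τ) ^ ((17 : ℝ) / 9 - 1) * cos (θ τ) ^ ((26 : ℝ) / 9) * cos_sq' (θ τ)

variable {a : ℝ} {Φ W Ψ θ : ℝ → ℝ}

theorem isBigO_one_of_isSolutionAt (hsol : ∀ᶠ τ in atBot, IsSolutionAt a Φ W Ψ θ τ)
    (bΦ : Φ =O[atBot] (1 : ℝ → ℝ)) : W =O[atBot] (1 : ℝ → ℝ) ∧ Ψ =O[atBot] (1 : ℝ → ℝ) := by
  have bcomp {k : ℝ → ℝ} (hk : Continuous k) : (fun t => k (θ t)) =O[atBot] (1 : ℝ → ℝ) :=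
    isBigO_one_comp_of_continuous hk isCompact_Icc (hsol.mono fun _ h => h.angle_mem)
  have hD : ∀ᶠ t in atBot, HasDerivAt (fun t => residualCoeffW (θ t))
      (deriv residualCoeffW (θ t) * cos (θ t) ^ ((26 : ℝ) / 9)) t :=
    hsol.mono fun t h =>
      ((contDiff_residualCoeffW.differentiable one_ne_zero).differentiableAt.hasDerivAt).comp t
        h.hasDerivAt_θ
  exact isBigO_one_of_thirdOrder_equation (hsol.mono fun _ h => h.hasDerivAt_Φ)
    (hsol.mono fun _ h => h.hasDerivAt_W)
    (hsol.mono fun _ h => h.hasDerivAt_Ψ.congr_deriv (dPsi_eq_forcing_sub ..))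
    (hsol.mono fun _ h =>
      hasDerivAt_coeffΨ_comp (cos_nonneg_of_mem_Icc h.angle_mem) h.hasDerivAt_θ)
    hD bΦ (bcomp continuous_coeffΦ) (bcomp continuous_coeffΨ) (bcomp continuous_flowDerivCoeffΨ)
    (bcomp contDiff_residualCoeffW.continuous)
    (bcomp ((contDiff_residualCoeffW.continuous_deriv le_rfl).mul
      (continuous_cos_rpow (by norm_num))))
    (isBoundedUnder_of_eventually_ge (hsol.mono fun t h => neg_one_sub_abs_le_forcing h.pos (θ t)))

theorem frequently_lt_of_limsup_eq_top (hsol : ∀ᶠ τ in atBot, IsSolutionAt a Φ W Ψ θ τ)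
    (hlimsup : limsup (fun τ => ((Φ τ + |W τ| + |Ψ τ| : ℝ) : EReal)) atBot = ⊤) (N : ℝ) :
    ∃ᶠ τ in atBot, N < Φ τ := by
  intro hN
  have bΦ : Φ =O[atBot] (1 : ℝ → ℝ) := by
    refine .of_bound N ?_
    filter_upwards [hsol, hN] with τ h hle
    simpa [abs_of_pos h.pos] using hle
  obtain ⟨bW, bΨ⟩ := isBigO_one_of_isSolutionAt hsol bΦ
  have bsum : (fun τ => Φ τ + |W τ| + |Ψ τ|) =O[atBot] (1 : ℝ → ℝ) :=
    (bΦ.add bW.abs_left).add bΨ.abs_left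
  exact (limsup_coe_ereal_lt_top (isBoundedUnder_le_and_ge_of_isBigO_one bsum).1).ne hlimsup

theorem exists_sequence_of_maxima_general (hsol : ∀ᶠ τ in atBot, IsSolutionAt a Φ W Ψ θ τ)
    (hliminf : liminf (fun τ => (Φ τ : EReal)) atBot < ⊤)
    (hlimsup : limsup (fun τ => ((Φ τ + |W τ| + |Ψ τ| : ℝ) : EReal)) atBot = ⊤) :
    ∃ τs : ℕ → ℝ, StrictAnti τs ∧ Tendsto τs atTop atBot ∧ (∀ n, IsLocalMax Φ (τs n)) ∧
      Tendsto (Φ ∘ τs) atTop atTop := by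
  obtain ⟨m, hm⟩ := exists_frequently_lt_of_liminf_coe_ereal_lt_top hliminf
  have hcont : ∀ᶠ τ in atBot, ContinuousAt Φ τ := hsol.mono fun _ h => h.hasDerivAt_Φ.continuousAt
  exact exists_strictAnti_seq_of_frequently_atBot fun N =>
    frequently_atBot_isLocalMax_of_oscillation hcont hm
      (frequently_lt_of_limsup_eq_top hsol hlimsup (max m N))

end SystemD

/-- existence of a sequence of local maxima going to `-∞` with unbounded
maximal values. -/
theorem exists_sequence_of_maxima (a : ℝ) (Φ W Ψ θ : ℝ → ℝ)
    (hsol : SolD a Φ W Ψ θ)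
    (hΦpos : ∀ τ : ℝ, 0 < Φ τ)
    (hθ : ∀ τ : ℝ, θ τ ∈ Set.Ioo (-(Real.pi / 2)) (Real.pi / 2))
    (hliminf : Filter.liminf (fun τ : ℝ => ((Φ τ : ℝ) : EReal)) atBot < ⊤)
    (hlimsup : Filter.limsup (fun τ : ℝ => ((Φ τ + |W τ| + |Ψ τ| : ℝ) : EReal)) atBot = ⊤) :
    ∃ τs : ℕ → ℝ, StrictAnti τs ∧ Tendsto τs atTop atBot ∧
      (∃ ε : ℕ → ℝ, (∀ n, 0 < ε n) ∧
        ∀ n, IsMaxOn Φ (Set.Icc (τs n - ε n) (τs n + ε n)) (τs n)) ∧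
      Filter.limsup (fun n : ℕ => ((Φ (τs n) : ℝ) : EReal)) atTop = ⊤ := by
  obtain ⟨τs, hanti, hbot, hmax, htop⟩ := exists_sequence_of_maxima_general
    (.of_forall fun τ => hsol.isSolutionAt (hΦpos τ) (Ioo_subset_Icc_self (hθ τ))) hliminf hlimsup
  choose ε hε hmaxε using fun n => exists_isMaxOn_Icc_of_isLocalMax (hmax n)
  exact ⟨τs, hanti, hbot, ⟨ε, hε, hmaxε⟩, (EReal.tendsto_coe_nhds_top_iff.2 htop).limsup_eq⟩
end
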